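/- There exists a constant c > 0 such that for every group Γ, all integers d > k ≥ 2, every prime power q ≥ 25, and every nonempty face s of B(2d,S_k,q) with 2k+1 − |s| ≥ 3, the following holds: for every Γ-valued 1-cochain f on the link of s there exists g from the link's vertices to Γ with c·dist(f,δg) ≤ wt(δf). -/

import Mathlib

open Finset
open scoped Classical

noncomputable instance (F : Type) [Field F] [Fintype F] (n : ℕ) :
    Fintype (Submodule F (Fin n → F)) :=
  Fintype.ofInjective (fun W => (W : Set (Fin n → F)))
    fun _ _ h => SetLike.coe_injective h

/-- A face of the projected flags complex `B(n,S,q)`: a finite chain of subspaces of `F^n`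
whose dimensions all lie in `S`. -/
def IsFlagFace (F : Type) [Field F] [Fintype F] (n : ℕ) (S : Finset ℕ)
    (s : Finset (Submodule F (Fin n → F))) : Prop :=
  IsChain (· ≤ ·) (s : Set (Submodule F (Fin n → F))) ∧
    ∀ W ∈ s, Module.finrank F W ∈ S

/-- A maximal face of `B(n,S,q)`: a chain containing one subspace of each dimension in `S`. -/
def IsMaxFlagFace (F : Type) [Field F] [Fintype F] (n : ℕ) (S : Finset ℕ)
    (T : Finset (Submodule F (Fin n → F))) : Prop :=
  IsFlagFace F n S T ∧ ∀ i ∈ S, ∃ W ∈ T, Module.finrank F W = i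

/-- The maximal faces of `B(n,S,q)` containing a given face `s`. -/
noncomputable def maxFacesAbove (F : Type) [Field F] [Fintype F] (n : ℕ) (S : Finset ℕ)
    (s : Finset (Submodule F (Fin n → F))) : Finset (Finset (Submodule F (Fin n → F))) :=
  Finset.univ.filter fun T => IsMaxFlagFace F n S T ∧ s ⊆ T

/-- `wt(δf) = Pr_{{u,v,w} ∼ π₂}[δf(u,v,w) ≠ 1]` for the link of `s`, where `π₂` samples a
uniformly random maximal face `T ⊇ s` and then a uniformly random 3-element subset of
`T ∖ s`. -/
noncomputable def linkWt (F : Type) [Field F] [Fintype F] (n : ℕ) (S : Finset ℕ)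
    (s : Finset (Submodule F (Fin n → F))) (Γ : Type) [Group Γ]
    (f : Submodule F (Fin n → F) → Submodule F (Fin n → F) → Γ) : ℝ :=
  (∑ T ∈ maxFacesAbove F n S s,
      (∑ e ∈ (T \ s).powersetCard 3,
          if ∃ u ∈ e, ∃ v ∈ e, ∃ w ∈ e, u ≠ v ∧ v ≠ w ∧ u ≠ w ∧
              f u v * f v w * f w u ≠ 1
          then (1 : ℝ) else 0) / (((T \ s).powersetCard 3).card : ℝ)) /
    ((maxFacesAbove F n S s).card : ℝ)

/-- `dist(f, δg) = Pr_{{u,v} ∼ π₁}[f(u,v) ≠ g(u)·g(v)⁻¹]` for the link of `s`, where `π₁`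
samples a uniformly random maximal face `T ⊇ s` and then a uniformly random 2-element
subset of `T ∖ s`. -/
noncomputable def linkDist (F : Type) [Field F] [Fintype F] (n : ℕ) (S : Finset ℕ)
    (s : Finset (Submodule F (Fin n → F))) (Γ : Type) [Group Γ]
    (f : Submodule F (Fin n → F) → Submodule F (Fin n → F) → Γ)
    (g : Submodule F (Fin n → F) → Γ) : ℝ :=
  (∑ T ∈ maxFacesAbove F n S s,
      (∑ e ∈ (T \ s).powersetCard 2,
          if ∃ u ∈ e, ∃ v ∈ e, u ≠ v ∧ f u v ≠ g u * (g v)⁻¹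
          then (1 : ℝ) else 0) / (((T \ s).powersetCard 2).card : ℝ)) /
    ((maxFacesAbove F n S s).card : ℝ)

/-!
The stabilizer of the face `s` acts on the link of `s`, and by transitivity on the chains of a given
type any two triangles of the same type are translates of each other. Suppose that a potential `g`
can be written down in terms of a cochain `f`, in such a way that `f u v = g u * (g v)⁻¹` follows
from the vanishing of the coboundary on at most eleven triangles, whose vertices have the ranks of
`u`, `v` and of five fixed parameters (a cone). Averaging over all translates of the cone, the
expected disagreement of `f` and `δg` is then controlled by the density of the bad triangles of
those types. Averaging moreover over the parameters, taken from a maximal face, turns this into a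
bound by `wt(δf)`, as long as a positive proportion of the tuples of parameters come from a cone.

Elements of the link lying in different gaps of the chain `s` are comparable. If no gap contains a
fifth of a maximal face, most tuples meet three different gaps, and the link is coned off as a join.
If all gaps contain at most one element of it, then the link itself has at most five types, and
three elements in different gaps suffice. Otherwise there is a large gap, which is an interval in
the lattice of subspaces, or in its dual for the lowest gap; there one cones off along paths which
use joins of elements of small rank.
-/

open Relation OrderDual Pointwise

section Derivation

variable {P Γ : Type*} [Group Γ]

/-- A 1-cochain on the comparability graph of `V`, with the convention that it takes the
value `1` on the degenerate edges `(x, x)`. -/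
structure IsCochain [LE P] (V : Set P) (f : P → P → Γ) : Prop where
  self : ∀ x, f x x = 1
  inv : ∀ x ∈ V, ∀ y ∈ V, SymmGen (· ≤ ·) x y → f x y = (f y x)⁻¹

/-- The ordered triples of pairwise comparable elements of `V`. Repetitions are allowed: every
cochain is flat on a triple with a repeated entry. -/
def triangles [LE P] (V : Set P) : Set (P × P × P) :=
  {t | (t.1 ∈ V ∧ t.2.1 ∈ V ∧ t.2.2 ∈ V) ∧ SymmGen (· ≤ ·) t.1 t.2.1 ∧
    SymmGen (· ≤ ·) t.2.1 t.2.2 ∧ SymmGen (· ≤ ·) t.1 t.2.2}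

/-- The coboundary of `f` vanishes on the triple `t`. -/
def IsFlat (f : P → P → Γ) (t : P × P × P) : Prop :=
  f t.1 t.2.1 * f t.2.1 t.2.2 * f t.2.2 t.1 = 1

/-- The property `p` of cochains on `W` follows from the vanishing of the coboundary on `N`
triangles of `W`, which do not depend on the cochain. -/
def Derivable [LE P] (W : Set P) (N : ℕ) (p : (P → P → Γ) → Prop) : Prop :=
  ∃ D : Finset (P × P × P), #D ≤ N ∧ (∀ t ∈ D, t ∈ triangles W) ∧
    ∀ f : P → P → Γ, IsCochain W f → (∀ t ∈ D, IsFlat f t) → p f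

variable [PartialOrder P] {W V : Set P} {N M : ℕ} {p q : (P → P → Γ) → Prop} {x y z : P}

theorem IsCochain.mono {f : P → P → Γ} (hf : IsCochain V f) (h : W ⊆ V) : IsCochain W f :=
  ⟨hf.self, fun x hx y hy => hf.inv x (h hx) y (h hy)⟩

theorem Derivable.imp (h : Derivable W N p) (hNM : N ≤ M)
    (hpq : ∀ f, IsCochain W f → p f → q f) : Derivable W M q := by
  obtain ⟨D, hD, hDW, hp⟩ := h
  exact ⟨D, hD.trans hNM, hDW, fun f hf hflat => hpq f hf (hp f hf hflat)⟩

theorem Derivable.and (hp : Derivable W N p) (hq : Derivable W M q) :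
    Derivable W (N + M) fun f => p f ∧ q f := by
  obtain ⟨D, hD, hDW, hpD⟩ := hp
  obtain ⟨E, hE, hEW, hqE⟩ := hq
  refine ⟨D ∪ E, (card_union_le D E).trans (add_le_add hD hE), fun t ht => ?_, fun f hf hflat =>
    ⟨hpD f hf fun t ht => hflat t (mem_union_left E ht),
      hqE f hf fun t ht => hflat t (mem_union_right D ht)⟩⟩
  exact (mem_union.1 ht).elim (hDW t) (hEW t)

theorem Derivable.triangle (hx : x ∈ W) (hy : y ∈ W) (hz : z ∈ W) (hxy : SymmGen (· ≤ ·) x y)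
    (hyz : SymmGen (· ≤ ·) y z) (hxz : SymmGen (· ≤ ·) x z) :
    Derivable W 1 fun f : P → P → Γ => f x y * f y z = f x z := by
  refine ⟨{(x, y, z)}, by simp, by simp [triangles, *], fun f hf hflat => ?_⟩
  have hxyz : f x y * f y z * f z x = 1 := hflat (x, y, z) (mem_singleton_self _)
  exact (eq_inv_of_mul_eq_one_left hxyz).trans (hf.inv x hx z hz hxz).symm

theorem Derivable.mono (h : Derivable W N p) (hWV : W ⊆ V) : Derivable V N p := by
  obtain ⟨D, hDN, hDW, hD⟩ := h
  exact ⟨D, hDN, fun t ht =>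
    ⟨⟨hWV (hDW t ht).1.1, hWV (hDW t ht).1.2.1, hWV (hDW t ht).1.2.2⟩, (hDW t ht).2⟩,
    fun f hf => hD f (hf.mono hWV)⟩

theorem Derivable.of_dual {p : (Pᵒᵈ → Pᵒᵈ → Γ) → Prop} (h : Derivable (ofDual ⁻¹' W) N p) :
    Derivable W N fun f => p fun x y => f (ofDual x) (ofDual y) := by
  obtain ⟨D, hDN, hDW, hD⟩ := h
  refine ⟨D, hDN, fun t ht => ?_, fun f hf hflat => hD _ ⟨hf.self, fun x hx y hy hxy =>
    hf.inv x hx y hy hxy.symm⟩ hflat⟩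
  obtain ⟨hW, h₁, h₂, h₃⟩ := hDW t ht
  exact ⟨hW, h₁.symm, h₂.symm, h₃.symm⟩

theorem Derivable.symm {g : (P → P → Γ) → P → Γ} (hx : x ∈ W) (hy : y ∈ W)
    (hxy : SymmGen (· ≤ ·) x y) (h : Derivable W N fun f => f y x = g f y * (g f x)⁻¹) :
    Derivable W N fun f => f x y = g f x * (g f y)⁻¹ :=
  h.imp le_rfl fun f hf hyx => by
    rw [hf.inv x hx y hy hxy, hyx, mul_inv_rev, inv_inv]

end Derivation

section Cone

variable {P : Type*}

/-- The elements of `V` having the rank of some element of `A`. -/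
def palette (V : Set P) (ρ : P → ℕ) (A : Set P) : Set P :=
  {x ∈ V | ∃ a ∈ A, ρ a = ρ x}

/-- A cone over the comparability graph of `V`, with parameters `θ`: a potential trivializing every
cochain, where the identity on each edge `u < v` costs at most `N` triangles, all of whose
vertices have the rank of `u`, of `v`, or of some `θ i`. -/
def IsCone [Preorder P] (V : Set P) (ρ : P → ℕ) (Γ : Type*) [Group Γ] {n : ℕ} (N : ℕ)
    (θ : Fin n → P) : Prop :=
  ∃ pot : (P → P → Γ) → P → Γ, ∀ u ∈ V, ∀ v ∈ V, u < v →
    Derivable (palette V ρ (insert u (insert v (Set.range θ)))) N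
      fun f => f u v = pot f u * (pot f v)⁻¹

variable {V : Set P} {ρ : P → ℕ} {n N : ℕ} {θ : Fin n → P} {u v x : P}

theorem palette_subset (V : Set P) (ρ : P → ℕ) (A : Set P) : palette V ρ A ⊆ V :=
  fun _ hx => hx.1

theorem left_mem_palette (hu : u ∈ V) :
    u ∈ palette V ρ (insert u (insert v (Set.range θ))) :=
  ⟨hu, u, Set.mem_insert _ _, rfl⟩

theorem right_mem_palette (hv : v ∈ V) :
    v ∈ palette V ρ (insert u (insert v (Set.range θ))) :=
  ⟨hv, v, Set.mem_insert_of_mem _ (Set.mem_insert _ _), rfl⟩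

theorem mem_palette_of_rank_eq (hx : x ∈ V) (i : Fin n) (h : ρ x = ρ (θ i)) :
    x ∈ palette V ρ (insert u (insert v (Set.range θ))) :=
  ⟨hx, θ i, Set.mem_insert_of_mem _ (Set.mem_insert_of_mem _ (Set.mem_range_self i)), h.symm⟩

theorem IsCone.of_dual [PartialOrder P] {Γ : Type*} [Group Γ] {ρ' : Pᵒᵈ → ℕ}
    (hρ : ∀ x y, ρ' (toDual x) = ρ' (toDual y) → ρ x = ρ y)
    (h : IsCone (ofDual ⁻¹' V) ρ' Γ N (toDual ∘ θ)) : IsCone V ρ Γ N θ := by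
  obtain ⟨pot, hpot⟩ := h
  refine ⟨pot, fun u hu v hv huv => ?_⟩
  refine Derivable.symm (left_mem_palette hu) (right_mem_palette hv) (.of_le huv.le) ?_
  refine ((hpot (toDual v) hv (toDual u) hu huv).mono ?_).of_dual
  rw [Set.insert_comm]
  rintro x ⟨hx, a, ha, hax⟩
  exact ⟨hx, a, ha, hρ _ _ hax⟩

end Cone

section Paths

variable {P : Type*} [PartialOrder P]

/-- A choice of edge paths `u, mid u, top (mid u), A` joining every `u ∈ M` to a common apex `A`,
through elements of ranks `r₀` and `r₂`. -/
structure PathsTo (M : Set P) (ρ : P → ℕ) (r₀ r₂ : ℕ) (A : P) where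
  mid : P → P
  top : P → P
  mid_mem : ∀ {u}, u ∈ M → mid u ∈ M
  rank_mid : ∀ {u}, u ∈ M → ρ (mid u) = r₀
  symmGen_mid : ∀ {u}, u ∈ M → SymmGen (· ≤ ·) u (mid u)
  top_mem : ∀ {u}, u ∈ M → top (mid u) ∈ M
  rank_top : ∀ {u}, u ∈ M → ρ (top (mid u)) = r₂
  mid_le_top : ∀ {u}, u ∈ M → mid u ≤ top (mid u)
  apex_le_top : ∀ {u}, u ∈ M → A ≤ top (mid u)

namespace PathsTo

variable {M V W : Set P} {ρ : P → ℕ} {r₀ r₂ : ℕ} {A u v x t : P} {Γ : Type*} [Group Γ]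

/-- The product of `f` along the path from `u` to the apex, or along the edge from `u` to the apex
when `u ∉ M`. -/
noncomputable def pot (π : PathsTo M ρ r₀ r₂ A) (f : P → P → Γ) (u : P) : Γ :=
  if u ∈ M then f u (π.mid u) * f (π.mid u) (π.top (π.mid u)) * f (π.top (π.mid u)) A else f u A

/-- The comparabilities that allow one to deform the path from `u` to the apex, followed by the edge
from the apex to `t`, into the path `u, x, t`. -/
structure IsBridge (π : PathsTo M ρ r₀ r₂ A) (u x t : P) : Prop where
  left_mid : SymmGen (· ≤ ·) x u
  mid : SymmGen (· ≤ ·) x (π.mid u)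
  right : SymmGen (· ≤ ·) x t
  mid_right : SymmGen (· ≤ ·) (π.mid u) t
  top_right : SymmGen (· ≤ ·) (π.top (π.mid u)) t

theorem IsBridge.derivable {π : PathsTo M ρ r₀ r₂ A} (h : π.IsBridge u x t) (hu : u ∈ M)
    (hAt : SymmGen (· ≤ ·) A t) (hW : {u, x, t, π.mid u, π.top (π.mid u), A} ⊆ W) :
    Derivable W 4 fun f : P → P → Γ => π.pot f u = f u x * f x t * (f A t)⁻¹ := by
  simp only [Set.insert_subset_iff, Set.singleton_subset_iff] at hW
  obtain ⟨huW, hxW, htW, hmW, hTW, hAW⟩ := hW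
  refine (((Derivable.triangle huW hxW hmW h.left_mid.symm h.mid (π.symmGen_mid hu)).and
    (Derivable.triangle hxW hmW htW h.mid h.mid_right h.right)).and
    ((Derivable.triangle hmW hTW htW (π.mid_le_top hu).symmGen h.top_right h.mid_right).and
    (Derivable.triangle hTW hAW htW (π.apex_le_top hu).symmGen_symm hAt h.top_right))).imp
    le_rfl fun f _ ⟨⟨hux, hxt⟩, hmt, hTt⟩ => ?_
  rw [pot, if_pos hu, ← hux, ← hxt, ← hmt, ← hTt]
  group

/-- A filling of the triangle formed by the edge from `u` to `v` and the paths from `u` and `v` to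
the apex: the middle vertex `t` is joined to `u` through `x` and to `v` through `w`. -/
def IsFilled (π : PathsTo M ρ r₀ r₂ A) (W : Set P) (u v : P) : Prop :=
  ∃ x ∈ W, ∃ w ∈ W, ∃ t ∈ W, SymmGen (· ≤ ·) A t ∧ SymmGen (· ≤ ·) x v ∧ SymmGen (· ≤ ·) x w ∧
    π.IsBridge u x t ∧ π.IsBridge v w t

theorem IsFilled.derivable {π : PathsTo M ρ r₀ r₂ A} (h : π.IsFilled W u v) (hu : u ∈ M)
    (hv : v ∈ M) (huv : SymmGen (· ≤ ·) u v)
    (hW : {u, v, π.mid u, π.top (π.mid u), π.mid v, π.top (π.mid v), A} ⊆ W) :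
    Derivable W 11 fun f : P → P → Γ => f u v = π.pot f u * (π.pot f v)⁻¹ := by
  obtain ⟨x, hx, w, hw, t, ht, hAt, hxv, hxw, hxt, hwt⟩ := h
  simp only [Set.insert_subset_iff, Set.singleton_subset_iff] at hW
  obtain ⟨huW, hvW, hmuW, hTuW, hmvW, hTvW, hAW⟩ := hW
  have hu_path := hxt.derivable (Γ := Γ) (W := W) hu hAt (by simp [Set.insert_subset_iff, *])
  have hv_path := hwt.derivable (Γ := Γ) (W := W) hv hAt (by simp [Set.insert_subset_iff, *])
  refine ((hu_path.and hv_path).and ((Derivable.triangle huW hx hvW hxt.left_mid.symm hxv huv).and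
    ((Derivable.triangle hx hvW hw hxv hwt.left_mid.symm hxw).and
    (Derivable.triangle hx hw ht hxw hwt.right hxt.right)))).imp
    le_rfl fun f _ ⟨⟨hpu, hpv⟩, huxv, hxvw, hxwt⟩ => ?_
  rw [hpu, hpv, ← huxv, ← hxwt, ← hxvw]
  group

variable {θ : Fin 5 → P}

theorem derivable_of_notMem (π : PathsTo M ρ r₀ r₂ A) (hu : u ∈ M) (hv : v ∉ M)
    (hcomp : ∀ y ∈ M, SymmGen (· ≤ ·) v y) (hA : A ∈ M)
    (hW : {u, v, π.mid u, π.top (π.mid u), A} ⊆ W) :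
    Derivable W 3 fun f : P → P → Γ => f v u = π.pot f v * (π.pot f u)⁻¹ := by
  simp only [Set.insert_subset_iff, Set.singleton_subset_iff] at hW
  obtain ⟨huW, hvW, hmW, hTW, hAW⟩ := hW
  have hvm := hcomp _ (π.mid_mem hu)
  have hvT := hcomp _ (π.top_mem hu)
  refine ((Derivable.triangle hvW huW hmW (hcomp u hu) (π.symmGen_mid hu) hvm).and
    ((Derivable.triangle hvW hmW hTW hvm (π.mid_le_top hu).symmGen hvT).and
    (Derivable.triangle hvW hTW hAW hvT (π.apex_le_top hu).symmGen_symm (hcomp A hA)))).imp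
    le_rfl fun f _ ⟨hum, hmT, hTA⟩ => ?_
  rw [pot, pot, if_pos hu, if_neg hv, ← hTA, ← hmT, ← hum]
  group

theorem isCone (π : PathsTo M ρ (ρ (θ 0)) (ρ (θ 2)) (θ 1)) (hMV : M ⊆ V)
    (hcomp : ∀ x ∈ V, x ∉ M → ∀ y ∈ M, SymmGen (· ≤ ·) x y) (hA : θ 1 ∈ M)
    (hfill : ∀ u ∈ M, ∀ v ∈ M, u < v →
      π.IsFilled (palette V ρ (insert u (insert v (Set.range θ)))) u v) :
    IsCone V ρ Γ 11 θ := by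
  refine ⟨π.pot, fun u hu v hv huv => ?_⟩
  set W := palette V ρ (insert u (insert v (Set.range θ)))
  have hmid {y} (hy : y ∈ M) : π.mid y ∈ W :=
    mem_palette_of_rank_eq (hMV (π.mid_mem hy)) 0 (π.rank_mid hy)
  have htop {y} (hy : y ∈ M) : π.top (π.mid y) ∈ W :=
    mem_palette_of_rank_eq (hMV (π.top_mem hy)) 2 (π.rank_top hy)
  have huW : u ∈ W := left_mem_palette hu
  have hvW : v ∈ W := right_mem_palette hv
  have hAW : θ 1 ∈ W := mem_palette_of_rank_eq (hMV hA) 1 rfl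
  by_cases huM : u ∈ M <;> by_cases hvM : v ∈ M
  · refine IsFilled.derivable (W := W) (hfill u huM v hvM huv) huM hvM huv.symmGen ?_
    simp [Set.insert_subset_iff, *]
  · refine Derivable.symm huW hvW huv.symmGen ((π.derivable_of_notMem huM hvM
      (hcomp v hv hvM) hA ?_).imp (by norm_num) fun _ _ h => h)
    simp [Set.insert_subset_iff, *]
  · refine (π.derivable_of_notMem hvM huM (hcomp u hu huM) hA ?_).imp (by norm_num) fun _ _ h => h
    simp [Set.insert_subset_iff, *]
  · refine (Derivable.triangle huW hvW hAW huv.symmGen (hcomp v hv hvM _ hA)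
      (hcomp u hu huM _ hA)).imp (by norm_num) fun f _ h => ?_
    rw [pot, pot, if_neg huM, if_neg hvM]
    exact eq_mul_inv_of_mul_eq h

theorem isCone_of_outer (π : PathsTo M ρ (ρ (θ 0)) (ρ (θ 2)) (θ 1)) (hMV : M ⊆ V)
    (hcomp : ∀ x ∈ V, x ∉ M → ∀ y ∈ M, SymmGen (· ≤ ·) x y) (hA : θ 1 ∈ M)
    (hb : θ 3 ∈ V) (hbM : θ 3 ∉ M) : IsCone V ρ Γ 11 θ := by
  refine π.isCone hMV hcomp hA fun u hu v hv huv => ?_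
  have hcomp_b {y} (hy : y ∈ M) : SymmGen (· ≤ ·) y (θ 3) := (hcomp _ hb hbM y hy).symm
  have hbridge {y} (hy : y ∈ M) : π.IsBridge y y (θ 3) :=
    ⟨.rfl, π.symmGen_mid hy, hcomp_b hy, hcomp_b (π.mid_mem hy), hcomp_b (π.top_mem hy)⟩
  exact ⟨u, left_mem_palette (hMV hu), v, right_mem_palette (hMV hv), θ 3,
    mem_palette_of_rank_eq hb 3 rfl, hcomp_b hA, huv.symmGen, huv.symmGen, hbridge hu, hbridge hv⟩

end PathsTo

end Paths

section Part

variable {P : Type*} [Lattice P]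

/-- A rank function for which the lattice behaves like the lattice of subspaces of a vector space
with its dimension: it is modular and takes all intermediate values. -/
structure IsRank (ρ : P → ℕ) : Prop where
  strictMono : StrictMono ρ
  sup_add_inf : ∀ x y, ρ (x ⊔ y) + ρ (x ⊓ y) = ρ x + ρ y
  exists_between : ∀ {x y i}, x ≤ y → ρ x ≤ i → i ≤ ρ y → ∃ w, x ≤ w ∧ w ≤ y ∧ ρ w = i

theorem IsRank.sup_add_le {ρ : P → ℕ} (hρ : IsRank ρ) {x y z : P} (hx : z ≤ x) (hy : z ≤ y) :
    ρ (x ⊔ y) + ρ z ≤ ρ x + ρ y := by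
  have := hρ.strictMono.monotone (le_inf hx hy)
  have := hρ.sup_add_inf x y
  lia

theorem IsRank.le_of_symmGen {ρ : P → ℕ} (hρ : IsRank ρ) {x y : P} (h : SymmGen (· ≤ ·) x y)
    (hxy : ρ x ≤ ρ y) : x ≤ y :=
  h.elim id fun hyx => (hyx.eq_of_not_lt fun hlt => hxy.not_gt (hρ.strictMono hlt)).ge

theorem IsRank.eq_of_symmGen {ρ : P → ℕ} (hρ : IsRank ρ) {x y : P} (h : SymmGen (· ≤ ·) x y)
    (hxy : ρ x = ρ y) : x = y :=
  (hρ.le_of_symmGen h hxy.le).antisymm (hρ.le_of_symmGen h.symm hxy.ge)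

/-- Lines `t` and `t'` through a point `a`, and a line `w` meeting them in points `p` and `p'`, lie
in a plane, unless `p = p'` and `t ≠ t'`. -/
theorem IsRank.sup_sup_le_of_line {ρ : P → ℕ} (hρ : IsRank ρ) {a p p' t t' w : P}
    (hp : ρ p = ρ p') (hpw : p ≤ w) (hpw' : p' ≤ w) (hpt : p ≤ t) (hpt' : p' ≤ t')
    (htt' : p = p' → t = t') (hat : a ≤ t) (hat' : a ≤ t') (hw : ρ w = ρ p + 1)
    (ht : ρ t + ρ t' ≤ 2 * ρ p + 2) (ha : ρ p ≤ ρ a) : ρ (w ⊔ (t ⊔ t')) ≤ ρ p + 2 := by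
  rcases eq_or_ne p p' with rfl | hne
  · obtain rfl := htt' rfl
    have := hρ.sup_add_le hpw hpt
    rw [sup_idem]
    lia
  · have hlt : p < p ⊔ p' := le_sup_left.lt_of_ne fun heq =>
      hne <| hρ.eq_of_symmGen (left_eq_sup.1 heq).symmGen_symm hp
    have hw_le : w ≤ p ⊔ p' :=
      hρ.le_of_symmGen (sup_le hpw hpw').symmGen_symm (by have := hρ.strictMono hlt; lia)
    have := hρ.sup_add_le hat hat'
    rw [sup_eq_right.2 (hw_le.trans (sup_le_sup hpt hpt'))]
    lia

theorem IsRank.dual [BoundedOrder P] {ρ : P → ℕ} (hρ : IsRank ρ) :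
    IsRank fun x : Pᵒᵈ => ρ ⊤ - ρ (ofDual x) := by
  have htop (x : P) : ρ x ≤ ρ ⊤ := hρ.strictMono.monotone le_top
  refine ⟨fun x y hxy => ?_, fun x y => ?_, fun {x y i} hxy hx hy => ?_⟩
  · have : ρ (ofDual y) < ρ (ofDual x) := hρ.strictMono hxy
    have := htop (ofDual x)
    lia
  · have := hρ.sup_add_inf (ofDual x) (ofDual y)
    have := htop (ofDual x)
    have := htop (ofDual y)
    have := htop (ofDual x ⊔ ofDual y)
    have := htop (ofDual x ⊓ ofDual y)
    simp only [_root_.ofDual_sup, _root_.ofDual_inf]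
    lia
  · have := htop (ofDual x)
    have := htop (ofDual y)
    obtain ⟨w, hyw, hwx, hw⟩ := hρ.exists_between (x := ofDual y) (y := ofDual x) (i := ρ ⊤ - i)
      hxy (by lia) (by lia)
    exact ⟨toDual w, hwx, hyw, by simp only [ofDual_toDual]; lia⟩

/-- `M` consists of the elements of rank at most `m` of the interval from `Z` (excluded, of rank
`0` by convention) to `Y`, and all other elements of `V` are comparable to those of `M`. -/
structure IsPart (V M : Set P) (ρ : P → ℕ) (Z Y : P) (m : ℕ) : Prop where
  mem_iff : ∀ {x}, x ∈ M ↔ Z < x ∧ x ≤ Y ∧ ρ x ≤ ρ Z + m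
  subset : M ⊆ V
  comparable : ∀ x ∈ V, x ∉ M → ∀ y ∈ M, SymmGen (· ≤ ·) x y
  le : Z ≤ Y
  rank_le : ρ Z + m ≤ ρ Y

namespace IsPart

variable {V M : Set P} {ρ : P → ℕ} {Z Y A x y : P} {m i r₀ r₂ : ℕ} {θ : Fin 5 → P}

theorem bot_le (h : IsPart V M ρ Z Y m) (hx : x ∈ M) : Z ≤ x :=
  (h.mem_iff.1 hx).1.le

theorem le_top (h : IsPart V M ρ Z Y m) (hx : x ∈ M) : x ≤ Y :=
  (h.mem_iff.1 hx).2.1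

theorem rank_le_of_mem (h : IsPart V M ρ Z Y m) (hx : x ∈ M) : ρ x ≤ ρ Z + m :=
  (h.mem_iff.1 hx).2.2

theorem lt_rank (h : IsPart V M ρ Z Y m) (hρ : IsRank ρ) (hx : x ∈ M) : ρ Z < ρ x :=
  hρ.strictMono (h.mem_iff.1 hx).1

theorem exists_between (h : IsPart V M ρ Z Y m) (hρ : IsRank ρ) (hZx : Z ≤ x) (hxy : x ≤ y)
    (hyY : y ≤ Y) (hi : ρ Z < i) (him : i ≤ ρ Z + m) (hxi : ρ x ≤ i) (hiy : i ≤ ρ y) :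
    ∃ w ∈ M, x ≤ w ∧ w ≤ y ∧ ρ w = i := by
  obtain ⟨w, hxw, hwy, rfl⟩ := hρ.exists_between hxy hxi hiy
  have hZw : Z < w := (hZx.trans hxw).lt_of_ne (by rintro rfl; exact hi.false)
  exact ⟨w, h.mem_iff.2 ⟨hZw, hwy.trans hyY, him⟩, hxw, hwy, rfl⟩

theorem exists_ge (h : IsPart V M ρ Z Y m) (hρ : IsRank ρ) (hZx : Z ≤ x) (hxY : x ≤ Y)
    (hi : ρ Z < i) (him : i ≤ ρ Z + m) (hxi : ρ x ≤ i) : ∃ w ∈ M, x ≤ w ∧ ρ w = i := by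
  obtain ⟨w, hw, hxw, -, hwi⟩ :=
    h.exists_between hρ hZx hxY le_rfl hi him hxi (him.trans h.rank_le)
  exact ⟨w, hw, hxw, hwi⟩

/-- The `mid` map takes an element to a comparable one: below it if there is one of rank `r₀`. -/
theorem nonempty_pathsTo (h : IsPart V M ρ Z Y m) (hρ : IsRank ρ) (hA : A ∈ M) (h₀ : ρ Z < r₀)
    (h₂ : r₀ + ρ A ≤ r₂ + ρ Z) (h₂m : r₂ ≤ ρ Z + m) : Nonempty (PathsTo M ρ r₀ r₂ A) := by
  have hZA := h.lt_rank hρ hA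
  have hmid : ∀ u, u ∈ M → ∃ p ∈ M, ρ p = r₀ ∧ SymmGen (· ≤ ·) u p := by
    intro u hu
    rcases le_total (ρ u) r₀ with hur | hru
    · obtain ⟨p, hp, hup, hpr⟩ :=
        h.exists_ge hρ (h.bot_le hu) (h.le_top hu) h₀ (by lia) hur
      exact ⟨p, hp, hpr, hup.symmGen⟩
    · obtain ⟨p, hp, -, hpu, hpr⟩ :=
        h.exists_between hρ le_rfl (h.bot_le hu) (h.le_top hu) h₀ (by lia) h₀.le hru
      exact ⟨p, hp, hpr, hpu.symmGen_symm⟩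
  have htop : ∀ p, p ∈ M ∧ ρ p = r₀ → ∃ q ∈ M, ρ q = r₂ ∧ p ≤ q ∧ A ≤ q := by
    rintro p ⟨hp, rfl⟩
    have hpA := hρ.sup_add_le (h.bot_le hp) (h.bot_le hA)
    obtain ⟨q, hq, hpAq, hqr⟩ := h.exists_ge hρ ((h.bot_le hp).trans le_sup_left)
      (sup_le (h.le_top hp) (h.le_top hA)) (i := r₂) (by lia) h₂m (by lia)
    exact ⟨q, hq, hqr, le_sup_left.trans hpAq, le_sup_right.trans hpAq⟩
  choose! mid hmid hmid_rank hmid_symmGen using hmid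
  choose! top htop htop_rank hmid_le hA_le using htop
  exact ⟨⟨mid, top, @hmid, @hmid_rank, @hmid_symmGen,
    fun hu => htop _ ⟨hmid _ hu, hmid_rank _ hu⟩,
    fun hu => htop_rank _ ⟨hmid _ hu, hmid_rank _ hu⟩,
    fun hu => hmid_le _ ⟨hmid _ hu, hmid_rank _ hu⟩,
    fun hu => hA_le _ ⟨hmid _ hu, hmid_rank _ hu⟩⟩⟩

theorem isFilled_of_le (h : IsPart V M ρ Z Y m) (hρ : IsRank ρ)
    (π : PathsTo M ρ (ρ (θ 0)) (ρ (θ 2)) (θ 1)) {W : Set P} {u v w : P} (hu : u ∈ M) (hv : v ∈ M)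
    (hxW : x ∈ W) (hwW : w ∈ W) (hθW : ∀ t ∈ M, ρ t = ρ (θ 4) → t ∈ W) (hθ : θ 4 ∈ M)
    (hxu : SymmGen (· ≤ ·) x u) (hx : SymmGen (· ≤ ·) x (π.mid u)) (hxw : x ≤ w) (hwv : w ≤ v)
    (hw : SymmGen (· ≤ ·) w (π.mid v))
    (hrank : ρ (w ⊔ (π.top (π.mid u) ⊔ π.top (π.mid v))) ≤ ρ (θ 4)) : π.IsFilled W u v := by
  have hTu := π.top_mem hu
  obtain ⟨t, ht, hle, htθ⟩ := h.exists_ge hρ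
    (((h.bot_le hTu).trans le_sup_left).trans le_sup_right)
    (sup_le (hwv.trans (h.le_top hv)) (sup_le (h.le_top hTu) (h.le_top (π.top_mem hv))))
    (h.lt_rank hρ hθ) (h.rank_le_of_mem hθ) hrank
  simp only [sup_le_iff] at hle
  obtain ⟨hwt, hTut, hTvt⟩ := hle
  exact ⟨x, hxW, w, hwW, t, hθW t ht htθ, ((π.apex_le_top hu).trans hTut).symmGen,
    (hxw.trans hwv).symmGen, hxw.symmGen,
    ⟨hxu, hx, (hxw.trans hwt).symmGen, ((π.mid_le_top hu).trans hTut).symmGen, hTut.symmGen⟩,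
    ⟨hwv.symmGen, hw, hwt.symmGen, ((π.mid_le_top hv).trans hTvt).symmGen, hTvt.symmGen⟩⟩

theorem isCone_of_rank_le (h : IsPart V M ρ Z Y m) (hρ : IsRank ρ) (hθ : ∀ i, θ i ∈ M) {k : ℕ}
    (h₀ : ρ (θ 0) ≤ ρ Z + k) (h₁ : ρ (θ 1) ≤ ρ Z + k) (hk₂ : ρ Z + 2 * k ≤ ρ (θ 2))
    (h₂ : ρ (θ 2) ≤ ρ Z + 3 * k) (hk₃ : ρ Z + 2 * k ≤ ρ (θ 3)) (h₃ : ρ (θ 3) ≤ ρ Z + 3 * k)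
    (h₄ : ρ Z + 9 * k ≤ ρ (θ 4)) (Γ : Type*) [Group Γ] : IsCone V ρ Γ 11 θ := by
  obtain ⟨π⟩ := h.nonempty_pathsTo hρ (hθ 1) (h.lt_rank hρ (hθ 0)) (by lia : _ ≤ ρ (θ 2) + _)
    (h.rank_le_of_mem (hθ 2))
  refine π.isCone h.subset h.comparable (hθ 1) fun u hu v hv huv => ?_
  have hrank {w} (hZw : Z ≤ w) (hw : ρ w ≤ ρ Z + 3 * k) :
      ρ (w ⊔ (π.top (π.mid u) ⊔ π.top (π.mid v))) ≤ ρ (θ 4) := by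
    have hTu := π.top_mem hu
    have := hρ.sup_add_le hZw ((h.bot_le hTu).trans (le_sup_left (b := π.top (π.mid v))))
    have := hρ.sup_add_le (h.bot_le hTu) (h.bot_le (π.top_mem hv))
    have := π.rank_top hu
    have := π.rank_top hv
    lia
  have hθW (i : Fin 5) (t : P) (ht : t ∈ M) (hti : ρ t = ρ (θ i)) :
      t ∈ palette V ρ (insert u (insert v (Set.range θ))) :=
    mem_palette_of_rank_eq (h.subset ht) i hti
  rcases le_or_gt (ρ v) (ρ Z + 3 * k) with hvk | hkv
  · exact h.isFilled_of_le hρ π hu hv (left_mem_palette (h.subset hu))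
      (right_mem_palette (h.subset hv)) (hθW 4) (hθ 4) .rfl (π.symmGen_mid hu) huv.le le_rfl
      (π.symmGen_mid hv) (hrank (h.bot_le hv) hvk)
  obtain ⟨x, hx, hxW, hxu, hxmid, hxk⟩ : ∃ x ∈ M,
      x ∈ palette V ρ (insert u (insert v (Set.range θ))) ∧ x ≤ u ∧
        SymmGen (· ≤ ·) x (π.mid u) ∧ ρ x ≤ ρ Z + k := by
    rcases le_or_gt (ρ u) (ρ Z + k) with huk | hku
    · exact ⟨u, hu, left_mem_palette (h.subset hu), le_rfl, π.symmGen_mid hu, huk⟩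
    · have hmid := π.rank_mid hu
      exact ⟨π.mid u, π.mid_mem hu, hθW 0 _ (π.mid_mem hu) hmid,
        hρ.le_of_symmGen (π.symmGen_mid hu).symm (by lia), .rfl, by lia⟩
  have hmid := π.rank_mid hv
  have hmid_le : π.mid v ≤ v := hρ.le_of_symmGen (π.symmGen_mid hv).symm (by lia)
  have hsup := hρ.sup_add_le (h.bot_le hx) (h.bot_le (π.mid_mem hv))
  obtain ⟨w, hw, hxw, hwv, hwθ⟩ := h.exists_between hρ ((h.bot_le hx).trans le_sup_left)
    (sup_le (hxu.trans huv.le) hmid_le) (h.le_top hv) (h.lt_rank hρ (hθ 3))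
    (h.rank_le_of_mem (hθ 3)) (by lia) (by lia)
  exact h.isFilled_of_le hρ π hu hv hxW (hθW 3 w hw hwθ) (hθW 4) (hθ 4) hxu.symmGen hxmid
    (le_sup_left.trans hxw) hwv (le_sup_right.trans hxw).symmGen_symm
    (hrank (h.bot_le hw) (hwθ.trans_le h₃))

/-- The relative ranks `1`, `1`, `2`, `2`, `3` leave no room for joins in general position; instead
the path from `u` starts with a point of `u`, and `IsRank.sup_sup_le_of_line` applies. -/
theorem isCone_of_rank_eq (h : IsPart V M ρ Z Y m) (hρ : IsRank ρ) (hθ : ∀ i, θ i ∈ M)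
    (h₀ : ρ (θ 0) = ρ Z + 1) (h₁ : ρ (θ 1) = ρ Z + 1) (h₂ : ρ (θ 2) = ρ Z + 2)
    (h₃ : ρ (θ 3) = ρ Z + 2) (h₄ : ρ (θ 4) = ρ Z + 3) (Γ : Type*) [Group Γ] :
    IsCone V ρ Γ 11 θ := by
  obtain ⟨π⟩ := h.nonempty_pathsTo hρ (hθ 1) (h.lt_rank hρ (hθ 0)) (by lia : _ ≤ ρ (θ 2) + _)
    (h.rank_le_of_mem (hθ 2))
  refine π.isCone h.subset h.comparable (hθ 1) fun u hu v hv huv => ?_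
  have hθW (i : Fin 5) (t : P) (ht : t ∈ M) (hti : ρ t = ρ (θ i)) :
      t ∈ palette V ρ (insert u (insert v (Set.range θ))) :=
    mem_palette_of_rank_eq (h.subset ht) i hti
  have hmid_le {y} (hy : y ∈ M) : π.mid y ≤ y := by
    have := h.lt_rank hρ hy
    exact hρ.le_of_symmGen (π.symmGen_mid hy).symm (by rw [π.rank_mid hy]; lia)
  have hsup := hρ.sup_add_le (h.bot_le (π.mid_mem hu)) (h.bot_le (π.mid_mem hv))
  have := π.rank_mid hu
  have := π.rank_mid hv
  have := π.rank_top hu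
  have := π.rank_top hv
  have huv_rank := hρ.strictMono huv
  have hu_rank := h.lt_rank hρ hu
  obtain ⟨w, hw, hsup_le, hwv, hwθ⟩ := h.exists_between hρ (i := ρ (θ 3))
    ((h.bot_le (π.mid_mem hu)).trans le_sup_left)
    (sup_le ((hmid_le hu).trans huv.le) (hmid_le hv)) (h.le_top hv) (h.lt_rank hρ (hθ 3))
    (h.rank_le_of_mem (hθ 3)) (by lia) (by lia)
  obtain ⟨huw, hvw⟩ := sup_le_iff.1 hsup_le
  refine h.isFilled_of_le hρ π hu hv (hθW 0 _ (π.mid_mem hu) (π.rank_mid hu)) (hθW 3 w hw hwθ)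
    (hθW 4) (hθ 4) (hmid_le hu).symmGen .rfl huw hwv hvw.symmGen_symm ?_
  exact (hρ.sup_sup_le_of_line (by lia) huw hvw (π.mid_le_top hu) (π.mid_le_top hv)
    (congrArg π.top) (π.apex_le_top hu) (π.apex_le_top hv) (by lia) (by lia) (by lia)).trans
    (by lia)

end IsPart

end Part

section Counting

variable {α ι κ : Type*} [Fintype ι] [DecidableEq ι] [Fintype κ]

theorem card_piFinset_filter_comp_eq (E : Finset α) (e : κ ↪ ι) {σ : κ → α}
    (hσ : ∀ k, σ k ∈ E) :
    #{τ ∈ Fintype.piFinset fun _ : ι => E | τ ∘ e = σ} =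
      #E ^ (Fintype.card ι - Fintype.card κ) := by
  set t : ι → Finset α := fun i => if h : ∃ k, e k = i then {σ h.choose} else E
  have hcard (i : ι) : #(t i) = if i ∈ univ.map e then 1 else #E := by
    by_cases h : ∃ k, e k = i <;> simp [t, h]
  have hfiber : {τ ∈ Fintype.piFinset fun _ : ι => E | τ ∘ e = σ} = Fintype.piFinset t := by
    ext τ
    simp only [mem_filter, Fintype.mem_piFinset]
    refine ⟨?_, fun hτ => ?_⟩
    · rintro ⟨hτ, rfl⟩ i
      by_cases h : ∃ k, e k = i
      · simp [t, h, h.choose_spec]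
      · simp [t, h, hτ i]
    · have hτσ : τ ∘ e = σ := funext fun k => by
        have h : ∃ k', e k' = e k := ⟨k, rfl⟩
        have hk := hτ (e k)
        simp only [t, dif_pos h, mem_singleton, e.injective h.choose_spec] at hk
        exact hk
      refine ⟨fun i => ?_, hτσ⟩
      have hi := hτ i
      by_cases h : ∃ k, e k = i
      · simp only [t, dif_pos h, mem_singleton] at hi
        exact hi ▸ hσ _
      · simpa only [t, dif_neg h] using hi
  rw [hfiber, Fintype.card_piFinset]
  simp only [hcard, prod_ite, prod_const_one, one_mul, prod_const]
  rw [filter_not, filter_mem_eq_inter, univ_inter, card_univ_sdiff, card_map, card_univ]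

theorem sum_piFinset_comp [DecidableEq κ] (E : Finset α) (e : κ ↪ ι) (φ : (κ → α) → ℕ) :
    ∑ τ ∈ Fintype.piFinset fun _ : ι => E, φ (τ ∘ e) =
      #E ^ (Fintype.card ι - Fintype.card κ) * ∑ σ ∈ Fintype.piFinset fun _ : κ => E, φ σ := by
  rw [← sum_fiberwise_of_maps_to (t := Fintype.piFinset fun _ : κ => E) (g := (· ∘ e))
    fun τ hτ => Fintype.mem_piFinset.2 fun k => Fintype.mem_piFinset.1 hτ (e k), mul_sum]
  refine sum_congr rfl fun σ hσ => ?_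
  rw [sum_congr rfl fun τ hτ => by rw [(mem_filter.1 hτ).2], sum_const,
    card_piFinset_filter_comp_eq E e (Fintype.mem_piFinset.1 hσ), smul_eq_mul]

theorem card_piFinset_filter_key_eq_le {β : Type*} [DecidableEq β] (E : Finset α) (key : α → β)
    {m : ℕ} (hm : ∀ a ∈ E, #{x ∈ E | key x = key a} ≤ m) {i j : ι} (hij : i ≠ j) :
    #{θ ∈ Fintype.piFinset fun _ : ι => E | key (θ i) = key (θ j)} ≤
      #E ^ (Fintype.card ι - 2) * (m * #E) := by
  let e : Fin 2 ↪ ι := ⟨![i, j], by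
    intro a b; fin_cases a <;> fin_cases b <;> simp [hij, hij.symm]⟩
  have hpairs : #{σ ∈ Fintype.piFinset fun _ : Fin 2 => E | key (σ 0) = key (σ 1)} ≤ m * #E := by
    refine card_le_mul_card_image_of_maps_to (f := fun σ => σ 1)
      (fun σ hσ => Fintype.mem_piFinset.1 (mem_filter.1 hσ).1 1) m fun a ha => ?_
    refine le_trans (card_le_card_of_injOn (fun σ => σ 0) (fun σ hσ => ?_) ?_) (hm a ha)
    · simp only [coe_filter, mem_filter, Fintype.mem_piFinset, Set.mem_ofPred_eq] at hσ ⊢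
      exact ⟨hσ.1.1 0, hσ.2 ▸ hσ.1.2⟩
    · intro σ hσ τ hτ hστ
      simp only [coe_filter, mem_filter, Set.mem_ofPred_eq] at hσ hτ
      ext k
      fin_cases k
      exacts [hστ, hσ.2.trans hτ.2.symm]
  have hsum := sum_piFinset_comp E e fun σ => if key (σ 0) = key (σ 1) then 1 else 0
  simp only [← card_filter, Function.comp_apply, Fintype.card_fin] at hsum
  exact hsum.trans_le (Nat.mul_le_mul_left _ hpairs)

end Counting

section ManyCones

variable {P Γ : Type*} [Group Γ] {V : Set P} {ρ : P → ℕ} {E : Finset P}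

/-- A positive proportion of the tuples `θ ∈ E⁵` are parameters of cones on `V`. -/
def HasManyCones [Preorder P] (V : Set P) (ρ : P → ℕ) (Γ : Type*) [Group Γ] (E : Finset P) :
    Prop :=
  ∃ Θ : Finset (Fin 5 → P), (∀ θ ∈ Θ, (∀ i, θ i ∈ E) ∧ IsCone V ρ Γ 11 θ) ∧
    #E ^ 5 ≤ 100 ^ 5 * #Θ

theorem HasManyCones.of_isCone [Preorder P] {θ : Fin 5 → P} (hθ : ∀ i, θ i ∈ E)
    (h : IsCone V ρ Γ 11 θ) (hE : #E ≤ 100) : HasManyCones V ρ Γ E :=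
  ⟨{θ}, fun θ' hθ' => mem_singleton.1 hθ' ▸ ⟨hθ, h⟩, by
    simpa using Nat.pow_le_pow_left hE 5⟩

theorem HasManyCones.of_dual [PartialOrder P] {ρ' : Pᵒᵈ → ℕ}
    (hρ : ∀ x y, ρ' (toDual x) = ρ' (toDual y) → ρ x = ρ y)
    (h : HasManyCones (ofDual ⁻¹' V) ρ' Γ (E.map toDual.toEmbedding)) :
    HasManyCones V ρ Γ E := by
  obtain ⟨Θ, hΘ, hcard⟩ := h
  refine ⟨Θ.map ⟨(ofDual ∘ ·), ofDual.injective.comp_left⟩, fun θ hθ => ?_, ?_⟩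
  · obtain ⟨θ', hθ', rfl⟩ := mem_map.1 hθ
    exact ⟨fun i => by simpa using (hΘ θ' hθ').1 i, (hΘ θ' hθ').2.of_dual hρ⟩
  · rwa [card_map] at hcard ⊢

section Keys

variable [PartialOrder P] {κ : Type*} {key : P → κ}

/-- The potential of a cone over a join: the apex is `b`, and the elements with the same key as `b`
reach it through `a`. -/
noncomputable def keyPot (key : P → κ) (a b : P) (f : P → P → Γ) (u : P) : Γ :=
  if key u = key b then f u a * f a b else f u b

theorem Derivable.triangle_of_key_ne {W : Set P} {x y z : P}
    (hkey : ∀ x ∈ W, ∀ y ∈ W, key x ≠ key y → SymmGen (· ≤ ·) x y) (hx : x ∈ W) (hy : y ∈ W)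
    (hz : z ∈ W) (hxy : key x ≠ key y) (hyz : key y ≠ key z) (hxz : key x ≠ key z) :
    Derivable W 1 fun f : P → P → Γ => f x y * f y z = f x z :=
  .triangle hx hy hz (hkey x hx y hy hxy) (hkey y hy z hz hyz) (hkey x hx z hz hxz)

theorem derivable_keyPot {W : Set P} {a x b u v : P}
    (hkey : ∀ x ∈ W, ∀ y ∈ W, key x ≠ key y → SymmGen (· ≤ ·) x y) (ha : a ∈ W) (hx : x ∈ W)
    (hb : b ∈ W) (hu : u ∈ W) (hv : v ∈ W) (hax : key a ≠ key x) (hxb : key x ≠ key b)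
    (hab : key a ≠ key b) (hub : key u ≠ key b) (hvb : key v = key b) :
    Derivable W 4 fun f : P → P → Γ => f u v = keyPot key a b f u * (keyPot key a b f v)⁻¹ := by
  simp only [keyPot, if_neg hub, if_pos hvb]
  have huv : key u ≠ key v := hvb ▸ hub
  have hva : key v ≠ key a := hvb ▸ hab.symm
  by_cases hua : key u = key a
  · have hux : key u ≠ key x := hua ▸ hax
    have hvx : key v ≠ key x := hvb ▸ hxb.symm
    refine (((Derivable.triangle_of_key_ne hkey hu hx hb hux hxb hub).and
      (Derivable.triangle_of_key_ne hkey hx ha hb hax.symm hab hxb)).and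
      ((Derivable.triangle_of_key_ne hkey hu hv hx huv hvx hux).and
      (Derivable.triangle_of_key_ne hkey hv hx ha hvx hax.symm hva))).imp
      le_rfl fun f _ ⟨⟨huxb, hxab⟩, huvx, hvxa⟩ => ?_
    rw [← huxb, ← hxab, ← huvx, ← hvxa]
    group
  · refine ((Derivable.triangle_of_key_ne hkey hu ha hb hua hab hub).and
      (Derivable.triangle_of_key_ne hkey hu hv ha huv hva hua)).imp
      (by norm_num) fun f _ ⟨huab, huva⟩ => ?_
    rw [← huab, ← huva]
    group

theorem isCone_of_key_ne (hkey : ∀ x ∈ V, ∀ y ∈ V, key x ≠ key y → SymmGen (· ≤ ·) x y)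
    {θ : Fin 5 → P} (hθ : ∀ i, θ i ∈ V) (h₀₁ : key (θ 0) ≠ key (θ 1))
    (h₁₂ : key (θ 1) ≠ key (θ 2)) (h₀₂ : key (θ 0) ≠ key (θ 2)) : IsCone V ρ Γ 11 θ := by
  refine ⟨keyPot key (θ 0) (θ 2), fun u hu v hv huv => ?_⟩
  set W := palette V ρ (insert u (insert v (Set.range θ)))
  have hkeyW : ∀ x ∈ W, ∀ y ∈ W, key x ≠ key y → SymmGen (· ≤ ·) x y :=
    fun x hx y hy => hkey x (palette_subset _ _ _ hx) y (palette_subset _ _ _ hy)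
  have hθW (i : Fin 5) : θ i ∈ W := mem_palette_of_rank_eq (hθ i) i rfl
  have huW : u ∈ W := left_mem_palette hu
  have hvW : v ∈ W := right_mem_palette hv
  have hmixed {x y : P} (hx : x ∈ W) (hy : y ∈ W) (hxb : key x ≠ key (θ 2))
      (hyb : key y = key (θ 2)) := (derivable_keyPot (Γ := Γ) hkeyW (hθW 0) (hθW 1) (hθW 2) hx hy
    h₀₁ h₁₂ h₀₂ hxb hyb).imp (M := 11) (by norm_num) fun _ _ h => h
  by_cases hub : key u = key (θ 2) <;> by_cases hvb : key v = key (θ 2)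
  · refine (Derivable.triangle huW hvW (hθW 0) huv.symmGen
      (hkeyW v hvW _ (hθW 0) (hvb ▸ h₀₂.symm)) (hkeyW u huW _ (hθW 0) (hub ▸ h₀₂.symm))).imp
      (by norm_num) fun f _ h => ?_
    rw [keyPot, keyPot, if_pos hub, if_pos hvb, ← h]
    group
  · exact (hmixed hvW huW hvb hub).symm huW hvW huv.symmGen
  · exact hmixed huW hvW hub hvb
  · refine (Derivable.triangle huW hvW (hθW 2) huv.symmGen (hkeyW v hvW _ (hθW 2) hvb)
      (hkeyW u huW _ (hθW 2) hub)).imp (by norm_num) fun f _ h => ?_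
    rw [keyPot, keyPot, if_neg hub, if_neg hvb, ← h]
    group

theorem hasManyCones_of_key_card_le [DecidableEq κ]
    (hkey : ∀ x ∈ V, ∀ y ∈ V, key x ≠ key y → SymmGen (· ≤ ·) x y) (hEV : ∀ x ∈ E, x ∈ V) {m : ℕ}
    (hm : ∀ x ∈ E, #{y ∈ E | key y = key x} ≤ m) (hmE : 5 * m < #E) : HasManyCones V ρ Γ E := by
  let bad (i j : Fin 5) := {θ ∈ Fintype.piFinset fun _ : Fin 5 => E | key (θ i) = key (θ j)}
  have hbad {i j : Fin 5} (hij : i ≠ j) : 5 * #(bad i j) ≤ #E ^ 5 := calc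
    5 * #(bad i j) ≤ 5 * (#E ^ 3 * (m * #E)) :=
      Nat.mul_le_mul_left 5 (card_piFinset_filter_key_eq_le E key hm hij)
    _ = 5 * m * #E ^ 4 := by ring
    _ ≤ #E * #E ^ 4 := Nat.mul_le_mul_right _ hmE.le
    _ = #E ^ 5 := by ring
  refine ⟨(Fintype.piFinset fun _ : Fin 5 => E) \ (bad 0 1 ∪ bad 1 2 ∪ bad 0 2),
    fun θ hθ => ?_, ?_⟩
  · simp only [mem_sdiff, mem_union, not_or, bad, mem_filter, not_and] at hθ
    obtain ⟨hθE, ⟨h₀₁, h₁₂⟩, h₀₂⟩ := hθ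
    have hE := Fintype.mem_piFinset.1 hθE
    exact ⟨hE, isCone_of_key_ne hkey (fun i => hEV _ (hE i)) (h₀₁ hθE) (h₁₂ hθE) (h₀₂ hθE)⟩
  · have hsdiff := le_card_sdiff (bad 0 1 ∪ bad 1 2 ∪ bad 0 2) (Fintype.piFinset fun _ : Fin 5 => E)
    have hunion := card_union_le (bad 0 1 ∪ bad 1 2) (bad 0 2)
    have hunion' := card_union_le (bad 0 1) (bad 1 2)
    have h₀₁ := hbad (i := 0) (j := 1) (by decide)
    have h₁₂ := hbad (i := 1) (j := 2) (by decide)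
    have h₀₂ := hbad (i := 0) (j := 2) (by decide)
    rw [Fintype.card_piFinset_const] at hsdiff
    lia

theorem hasManyCones_of_injOn_key
    (hkey : ∀ x ∈ V, ∀ y ∈ V, key x ≠ key y → SymmGen (· ≤ ·) x y) (hEV : ∀ x ∈ E, x ∈ V)
    (hinj : Set.InjOn key E) (hE : 3 ≤ #E) (hE' : #E ≤ 100) : HasManyCones V ρ Γ E := by
  obtain ⟨a, ha, x, hx, b, hb, hax, hab, hxb⟩ := two_lt_card.1 hE
  have hθ : ∀ i, ![a, x, b, b, b] i ∈ E := by simp [Fin.forall_fin_succ, *]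
  exact .of_isCone hθ (isCone_of_key_ne hkey (fun i => hEV _ (hθ i)) (hinj.ne ha hx hax)
    (hinj.ne hx hb hxb) (hinj.ne ha hb hab)) hE'

end Keys

section Parts

variable [Lattice P] {M : Set P} {Z Y : P} {m : ℕ}

theorem IsPart.hasManyCones_of_ten_le (h : IsPart V M ρ Z Y m) (hρ : IsRank ρ)
    (hE : ∀ i, ρ Z < i → i ≤ ρ Z + m → ∃ e ∈ E, e ∈ M ∧ ρ e = i) (hEm : #E ≤ 5 * m)
    (hm : 10 ≤ m) : HasManyCones V ρ Γ E := by
  obtain ⟨k, hk, hkm, hmk⟩ : ∃ k, 1 ≤ k ∧ 10 * k ≤ m ∧ m ≤ 20 * k :=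
    ⟨m / 10, by lia, by lia, by lia⟩
  let lo : Fin 5 → ℕ := ![1, 1, 2 * k, 2 * k, 9 * k]
  let hi : Fin 5 → ℕ := ![k, k, 3 * k, 3 * k, 10 * k]
  let window (i : Fin 5) := {e ∈ E | e ∈ M ∧ ρ Z + lo i ≤ ρ e ∧ ρ e ≤ ρ Z + hi i}
  have hbounds : ∀ i, 1 ≤ lo i ∧ hi i ≤ m ∧ k + lo i ≤ hi i + 1 := by
    simp only [Fin.forall_fin_succ, Fin.isValue, Matrix.cons_val_zero, Std.le_refl, and_true,
      true_and, Matrix.cons_val_succ, Matrix.cons_val_fin_one, forall_const, and_self_left, lo, hi]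
    lia
  have hwindow (i : Fin 5) : k ≤ #(window i) := by
    obtain ⟨hlo, hhi, hlohi⟩ := hbounds i
    have hsub : Icc (ρ Z + lo i) (ρ Z + hi i) ⊆ (window i).image ρ := fun j hj => by
      rw [mem_Icc] at hj
      obtain ⟨e, he, heM, rfl⟩ := hE j (by lia) (by lia)
      exact mem_image_of_mem ρ (mem_filter.2 ⟨he, heM, hj⟩)
    have hcard := (card_le_card hsub).trans card_image_le
    rw [Nat.card_Icc] at hcard
    lia
  refine ⟨Fintype.piFinset window, fun θ hθ => ?_, ?_⟩
  · have hθ' (i : Fin 5) := mem_filter.1 (Fintype.mem_piFinset.1 hθ i)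
    exact ⟨fun i => (hθ' i).1, h.isCone_of_rank_le hρ (fun i => (hθ' i).2.1) (hθ' 0).2.2.2
      (hθ' 1).2.2.2 (hθ' 2).2.2.1 (hθ' 2).2.2.2 (hθ' 3).2.2.1 (hθ' 3).2.2.2 (hθ' 4).2.2.1 Γ⟩
  · calc #E ^ 5 ≤ (100 * k) ^ 5 := Nat.pow_le_pow_left (by lia) 5
      _ = 100 ^ 5 * ∏ _i : Fin 5, k := by simp [mul_pow]
      _ ≤ 100 ^ 5 * ∏ i, #(window i) := Nat.mul_le_mul_left _ (prod_le_prod' fun i _ => hwindow i)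
      _ = 100 ^ 5 * #(Fintype.piFinset window) := by rw [Fintype.card_piFinset]

theorem IsPart.hasManyCones (h : IsPart V M ρ Z Y m) (hρ : IsRank ρ)
    (hE : ∀ i, ρ Z < i → i ≤ ρ Z + m → ∃ e ∈ E, e ∈ M ∧ ρ e = i) (hEV : ∀ x ∈ E, x ∈ V)
    (hEm : #E ≤ 5 * m) (hm : 2 ≤ m) (hEM : m = 2 → ∃ b ∈ E, b ∉ M) : HasManyCones V ρ Γ E := by
  rcases le_or_gt 10 m with hm10 | hm10
  · exact h.hasManyCones_of_ten_le hρ hE hEm hm10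
  obtain ⟨p₁, hp₁E, hp₁, hp₁r⟩ := hE (ρ Z + 1) (by lia) (by lia)
  obtain ⟨p₂, hp₂E, hp₂, hp₂r⟩ := hE (ρ Z + 2) (by lia) (by lia)
  rcases hm.eq_or_lt with rfl | hm3
  · obtain ⟨b, hbE, hbM⟩ := hEM rfl
    obtain ⟨π⟩ := h.nonempty_pathsTo hρ hp₁ (r₀ := ρ p₁) (r₂ := ρ p₂) (by lia) (by lia) (by lia)
    exact .of_isCone (θ := ![p₁, p₁, p₂, b, b]) (by simp [Fin.forall_fin_succ, *])
      (PathsTo.isCone_of_outer π h.subset h.comparable hp₁ (hEV b hbE) hbM) (by lia)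
  · obtain ⟨p₃, hp₃E, hp₃, hp₃r⟩ := hE (ρ Z + 3) (by lia) (by lia)
    exact .of_isCone (θ := ![p₁, p₁, p₂, p₂, p₃]) (by simp [Fin.forall_fin_succ, *])
      (h.isCone_of_rank_eq hρ (by simp [Fin.forall_fin_succ, *]) hp₁r hp₁r hp₂r hp₂r hp₃r Γ)
      (by lia)

end Parts

theorem hasManyCones_of_key [PartialOrder P] {κ : Type*} [DecidableEq κ] {key : P → κ}
    (hkey : ∀ x ∈ V, ∀ y ∈ V, key x ≠ key y → SymmGen (· ≤ ·) x y) (hEV : ∀ x ∈ E, x ∈ V)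
    (hE : 3 ≤ #E) (hclass : ∀ x ∈ E, 2 ≤ #{y ∈ E | key y = key x} →
      #E ≤ 5 * #{y ∈ E | key y = key x} → HasManyCones V ρ Γ E) : HasManyCones V ρ Γ E := by
  obtain ⟨x, hx, hmax⟩ := E.exists_max_image (fun x => #{y ∈ E | key y = key x})
    (card_pos.1 (by lia))
  rcases lt_or_ge (5 * #{y ∈ E | key y = key x}) #E with hlt | hle
  · exact hasManyCones_of_key_card_le hkey hEV hmax hlt
  rcases le_or_gt 2 #{y ∈ E | key y = key x} with htwo | hone
  · exact hclass x hx htwo hle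
  · refine hasManyCones_of_injOn_key hkey hEV (fun y hy z hz hyz => ?_) hE (by lia)
    exact card_le_one.1 ((hmax y hy).trans (Nat.le_of_lt_succ hone)) y (by simpa using hy) z
      (by simpa [hyz] using hz)

end ManyCones

section Averaging

variable {H P Γ : Type*} [Group H] [MulAction H P] [Group Γ]

/-- The number of translates of the triple `t` on which the coboundary of `f` does not vanish. -/
noncomputable def defect (H : Type*) [Group H] [MulAction H P] [Fintype H] (f : P → P → Γ)
    (t : P × P × P) : ℕ :=
  #{h : H | ¬ IsFlat f (h • t)}

/-- The total defect of the triples of entries of the tuple `τ` at distinct positions. -/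
noncomputable def totalDefect (H : Type*) [Group H] [MulAction H P] [Fintype H] (f : P → P → Γ)
    {n : ℕ} (τ : Fin n → P) : ℕ :=
  ∑ e : Fin 3 ↪ Fin n, defect H f (τ (e 0), τ (e 1), τ (e 2))

/-- The triples of elements of `E` on which the coboundary of `f` does not vanish. -/
noncomputable def badTriangles (f : P → P → Γ) (E : Finset P) : Finset (Fin 3 → P) :=
  {σ ∈ Fintype.piFinset fun _ => E | ¬ IsFlat f (σ 0, σ 1, σ 2)}

theorem defect_smul [Fintype H] (f : P → P → Γ) (k : H) (t : P × P × P) :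
    defect H f (k • t) = defect H f t :=
  card_equiv (Equiv.mulRight k) fun h => by simp [mul_smul]

theorem sum_card_badTriangles_smul [Fintype H] (f : P → P → Γ) (E : Finset P) :
    ∑ h : H, #(badTriangles f (h • E)) =
      ∑ σ ∈ Fintype.piFinset fun _ : Fin 3 => E, defect H f (σ 0, σ 1, σ 2) := by
  have hcard (h : H) : #(badTriangles f (h • E)) =
      #{σ ∈ Fintype.piFinset fun _ : Fin 3 => E | ¬ IsFlat f (h • (σ 0, σ 1, σ 2))} :=
    (card_equiv (MulAction.toPerm h) fun σ => by simp [badTriangles]).symm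
  simp only [hcard, defect, card_filter]
  exact sum_comm

theorem sum_totalDefect_le [Fintype H] (f : P → P → Γ) {E : Finset P} {n : ℕ}
    {Θ : Finset (Fin n → P)} (hΘ : ∀ θ ∈ Θ, ∀ i, θ i ∈ E) :
    ∑ θ ∈ Θ, ∑ e ∈ E ×ˢ E, totalDefect H f (Matrix.vecCons e.1 (Matrix.vecCons e.2 θ)) ≤
      (n + 2).descFactorial 3 * #E ^ (n - 1) * ∑ h : H, #(badTriangles f (h • E)) := by
  calc ∑ θ ∈ Θ, ∑ e ∈ E ×ˢ E, totalDefect H f (Matrix.vecCons e.1 (Matrix.vecCons e.2 θ))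
    _ = ∑ τ ∈ (Θ ×ˢ E ×ˢ E).image fun p => Matrix.vecCons p.2.1 (Matrix.vecCons p.2.2 p.1),
          totalDefect H f τ := by
      rw [sum_image, sum_product]
      rintro ⟨θ, u, v⟩ - ⟨θ', u', v'⟩ - h
      simp_all [Matrix.vecCons_inj]
    _ ≤ ∑ τ ∈ Fintype.piFinset fun _ : Fin (n + 2) => E, totalDefect H f τ := by
      refine sum_le_sum_of_subset (image_subset_iff.2 fun p hp => ?_)
      obtain ⟨hθ, he⟩ := mem_product.1 hp
      obtain ⟨hu, hv⟩ := mem_product.1 he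
      exact Fintype.mem_piFinset.2 (Fin.cases hu (Fin.cases hv (hΘ _ hθ)))
    _ = ∑ _e : Fin 3 ↪ Fin (n + 2), #E ^ (n - 1) * ∑ h : H, #(badTriangles f (h • E)) := by
      rw [sum_card_badTriangles_smul]
      simp only [totalDefect]
      rw [sum_comm]
      refine sum_congr rfl fun e _ => ?_
      simpa using sum_piFinset_comp E e fun σ => defect H f (σ 0, σ 1, σ 2)
    _ = _ := by simp [Fintype.card_embedding_eq, mul_assoc]

variable [PartialOrder P] {V : Set P} {ρ : P → ℕ} {E : Finset P}

variable {f : P → P → Γ}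

theorem IsCochain.isFlat_of_eq (hf : IsCochain V f) {t : P × P × P} (ht : t ∈ triangles V)
    (h : t.1 = t.2.1 ∨ t.2.1 = t.2.2 ∨ t.1 = t.2.2) : IsFlat f t := by
  obtain ⟨x, y, z⟩ := t
  obtain ⟨⟨hx, hy, hz⟩, hxy, hyz, hxz⟩ := ht
  simp only at hx hy hz hxy hyz hxz h
  rw [IsFlat]
  rcases h with rfl | rfl | rfl
  · simp [hf.self, hf.inv x hx z hz hxz]
  · simp [hf.self, hf.inv x hx y hy hxy]
  · simp [hf.self, hf.inv x hx y hy hxy]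

/-- The increasing pairs of elements of `E` on which `f` differs from the coboundary of `g`. -/
noncomputable def badEdges (f : P → P → Γ) (g : P → Γ) (E : Finset P) : Finset (P × P) :=
  {e ∈ E ×ˢ E | e.1 < e.2 ∧ f e.1 e.2 ≠ g e.1 * (g e.2)⁻¹}

theorem card_badEdges_smul (f : P → P → Γ) (g : P → Γ) (h : H) (E : Finset P) :
    #(badEdges f g (h • E)) =
      #{e ∈ E ×ˢ E | h • e.1 < h • e.2 ∧ f (h • e.1) (h • e.2) ≠ g (h • e.1) * (g (h • e.2))⁻¹} :=
  (card_equiv (MulAction.toPerm h) fun e => by simp [badEdges]).symm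

/-- The group `H` acts by rank-preserving automorphisms of `P` and `V`, and it moves every triangle
of `V` to all triples of elements of `E` with the same ranks. -/
structure IsTypeTransitive (H : Type*) [Group H] [MulAction H P] (V : Set P) (ρ : P → ℕ)
    (E : Finset P) : Prop where
  smul_le : ∀ (h : H) {x y : P}, x ≤ y → h • x ≤ h • y
  smul_mem : ∀ (h : H) {x : P}, x ∈ V → h • x ∈ V
  rank_smul : ∀ (h : H) (x : P), ρ (h • x) = ρ x
  exists_smul_eq : ∀ t ∈ triangles V, ∀ x ∈ E, ∀ y ∈ E, ∀ z ∈ E,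
    ρ t.1 = ρ x → ρ t.2.1 = ρ y → ρ t.2.2 = ρ z → ∃ h : H, h • t = (x, y, z)

namespace IsTypeTransitive

theorem smul_symmGen (hH : IsTypeTransitive H V ρ E) (h : H) {x y : P}
    (hxy : SymmGen (· ≤ ·) x y) : SymmGen (· ≤ ·) (h • x) (h • y) :=
  hxy.imp (hH.smul_le h) (hH.smul_le h)

theorem smul_lt (hH : IsTypeTransitive H V ρ E) (h : H) {x y : P} (hxy : x < y) :
    h • x < h • y :=
  (hH.smul_le h hxy.le).lt_of_ne ((MulAction.injective h).ne hxy.ne)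

theorem smul_mem_triangles (hH : IsTypeTransitive H V ρ E) (h : H) {t : P × P × P}
    (ht : t ∈ triangles V) : h • t ∈ triangles V :=
  ⟨⟨hH.smul_mem h ht.1.1, hH.smul_mem h ht.1.2.1, hH.smul_mem h ht.1.2.2⟩,
    hH.smul_symmGen h ht.2.1, hH.smul_symmGen h ht.2.2.1, hH.smul_symmGen h ht.2.2.2⟩

theorem isCochain_smul (hH : IsTypeTransitive H V ρ E) (hf : IsCochain V f) (h : H) :
    IsCochain V fun x y => f (h • x) (h • y) :=
  ⟨fun x => hf.self (h • x), fun _ hx _ hy hxy =>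
    hf.inv _ (hH.smul_mem h hx) _ (hH.smul_mem h hy) (hH.smul_symmGen h hxy)⟩

theorem defect_eq_zero [Fintype H] (hH : IsTypeTransitive H V ρ E) (hf : IsCochain V f)
    {t : P × P × P} (ht : t ∈ triangles V) (h : t.1 = t.2.1 ∨ t.2.1 = t.2.2 ∨ t.1 = t.2.2) :
    defect H f t = 0 := by
  refine card_eq_zero.2 (filter_eq_empty_iff.2 fun k _ => not_not.2 ?_)
  exact hf.isFlat_of_eq (hH.smul_mem_triangles k ht) (by simpa using h)

theorem defect_le [Fintype H] (hH : IsTypeTransitive H V ρ E) (hf : IsCochain V f) {n : ℕ}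
    {τ : Fin n → P} (hτ : ∀ i, τ i ∈ E) {t : P × P × P} (ht : t ∈ triangles V) {i j k : Fin n}
    (hi : ρ t.1 = ρ (τ i)) (hj : ρ t.2.1 = ρ (τ j)) (hk : ρ t.2.2 = ρ (τ k)) :
    defect H f t ≤ totalDefect H f τ := by
  obtain ⟨h, ht'⟩ := hH.exists_smul_eq t ht _ (hτ i) _ (hτ j) _ (hτ k) hi hj hk
  rw [← defect_smul f h t, ht']
  by_cases hinj : Function.Injective ![i, j, k]
  · exact single_le_sum (f := fun e : Fin 3 ↪ Fin n => defect H f (τ (e 0), τ (e 1), τ (e 2)))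
      (fun _ _ => Nat.zero_le _) (mem_univ ⟨![i, j, k], hinj⟩)
  · rw [hH.defect_eq_zero hf (ht' ▸ hH.smul_mem_triangles h ht)]
    · exact Nat.zero_le _
    · have : i = j ∨ j = k ∨ i = k := by
        contrapose! hinj
        intro a b
        fin_cases a <;> fin_cases b <;> simp [hinj, hinj.1.symm, hinj.2.1.symm, hinj.2.2.symm]
      exact this.imp (congrArg τ) (Or.imp (congrArg τ) (congrArg τ))

end IsTypeTransitive

theorem Derivable.card_not_smul_le [Fintype H] (hH : IsTypeTransitive H V ρ E)
    (hf : IsCochain V f) {W : Set P} (hWV : W ⊆ V) {N b : ℕ} {p : (P → P → Γ) → Prop}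
    (hp : Derivable W N p) (hb : ∀ t ∈ triangles W, defect H f t ≤ b) :
    #({h | ¬ p fun x y => f (h • x) (h • y)} : Finset H) ≤ N * b := by
  obtain ⟨D, hDN, hDW, hD⟩ := hp
  have hsub : ({h | ¬ p fun x y => f (h • x) (h • y)} : Finset H) ⊆
      D.biUnion fun t => {h : H | ¬ IsFlat f (h • t)} := fun h hh => by
    simp only [mem_filter, mem_univ, true_and, mem_biUnion] at hh ⊢
    contrapose! hh
    exact hD _ ((hH.isCochain_smul hf h).mono hWV) hh
  exact (card_le_card hsub).trans <| (card_biUnion_le_card_mul _ _ _ fun t ht =>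
    hb t (hDW t ht)).trans (Nat.mul_le_mul_right b hDN)

namespace IsTypeTransitive

variable [Fintype H]

theorem card_bad_smul_le (hH : IsTypeTransitive H V ρ E) (hf : IsCochain V f)
    (hEV : ∀ x ∈ E, x ∈ V) {n N : ℕ} {θ : Fin n → P} (hθ : ∀ i, θ i ∈ E) {pot : (P → P → Γ) → P → Γ}
    (hpot : ∀ u ∈ V, ∀ v ∈ V, u < v → Derivable (palette V ρ (insert u (insert v (Set.range θ)))) N
      fun f => f u v = pot f u * (pot f v)⁻¹) {u v : P} (hu : u ∈ E) (hv : v ∈ E) (k : H) :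
    #{h : H | h • k • u < h • k • v ∧ f (h • k • u) (h • k • v) ≠
        pot (fun x y => f (h • x) (h • y)) (k • u) *
          (pot (fun x y => f (h • x) (h • y)) (k • v))⁻¹} ≤
      N * totalDefect H f (Matrix.vecCons u (Matrix.vecCons v θ)) := by
  by_cases hlt : k • u < k • v
  · refine (card_le_card (monotone_filter_right _ fun h _ => And.right)).trans <|
      (hpot _ (hH.smul_mem k (hEV u hu)) _ (hH.smul_mem k (hEV v hv)) hlt).card_not_smul_le hH hf
        (palette_subset _ _ _) fun t ht => ?_
    have hrank {x : P} (hx : x ∈ palette V ρ (insert (k • u) (insert (k • v) (Set.range θ)))) :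
        ∃ i, ρ x = ρ (Matrix.vecCons u (Matrix.vecCons v θ) i) := by
      obtain ⟨_, a, rfl | rfl | ⟨i, rfl⟩, ha⟩ := hx
      · exact ⟨0, ha.symm.trans (hH.rank_smul k u)⟩
      · exact ⟨1, ha.symm.trans (hH.rank_smul k v)⟩
      · exact ⟨i.succ.succ, ha.symm⟩
    obtain ⟨⟨h₀, h₁, h₂⟩, hcomp⟩ := ht
    obtain ⟨⟨i, hi⟩, ⟨j, hj⟩, ⟨l, hl⟩⟩ := And.intro (hrank h₀) (And.intro (hrank h₁) (hrank h₂))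
    exact hH.defect_le hf (Fin.cases hu (Fin.cases hv hθ))
      ⟨⟨h₀.1, h₁.1, h₂.1⟩, hcomp⟩ hi hj hl
  · rw [filter_false_of_mem fun h _ hh => hlt (by simpa using hH.smul_lt h⁻¹ hh.1)]
    exact Nat.zero_le _

theorem sum_card_badEdges_le (hH : IsTypeTransitive H V ρ E) (hf : IsCochain V f)
    (hEV : ∀ x ∈ E, x ∈ V) {n N : ℕ} {θ : Fin n → P} (hθ : ∀ i, θ i ∈ E)
    {pot : (P → P → Γ) → P → Γ}
    (hpot : ∀ u ∈ V, ∀ v ∈ V, u < v → Derivable (palette V ρ (insert u (insert v (Set.range θ)))) N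
      fun f => f u v = pot f u * (pot f v)⁻¹) :
    ∑ h' : H, ∑ h : H,
        #(badEdges f (fun w => pot (fun x y => f (h' • x) (h' • y)) (h'⁻¹ • w)) (h • E)) ≤
      Fintype.card H * (N * ∑ e ∈ E ×ˢ E,
        totalDefect H f (Matrix.vecCons e.1 (Matrix.vecCons e.2 θ))) := by
  set g : H → P → Γ := fun h' w => pot (fun x y => f (h' • x) (h' • y)) (h'⁻¹ • w) with hg
  calc ∑ h' : H, ∑ h : H, #(badEdges f (g h') (h • E))
    _ = ∑ h' : H, ∑ k : H, #(badEdges f (g h') ((h' * k) • E)) :=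
      sum_congr rfl fun h' _ => (Equiv.sum_comp (Equiv.mulLeft h') _).symm
    _ = ∑ k : H, ∑ e ∈ E ×ˢ E, #{h : H | h • k • e.1 < h • k • e.2 ∧
          f (h • k • e.1) (h • k • e.2) ≠ pot (fun x y => f (h • x) (h • y)) (k • e.1) *
            (pot (fun x y => f (h • x) (h • y)) (k • e.2))⁻¹} := by
      rw [sum_comm]
      refine sum_congr rfl fun k _ => ?_
      simp only [card_badEdges_smul, card_filter]
      simp only [mul_smul, hg, inv_smul_smul]
      exact sum_comm
    _ ≤ ∑ _k : H, ∑ e ∈ E ×ˢ E, N * totalDefect H f (Matrix.vecCons e.1 (Matrix.vecCons e.2 θ)) :=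
      sum_le_sum fun k _ => sum_le_sum fun e he => hH.card_bad_smul_le hf hEV hθ hpot
        (mem_product.1 he).1 (mem_product.1 he).2 k
    _ = _ := by simp [mul_sum]

theorem exists_sum_card_badEdges_le (hH : IsTypeTransitive H V ρ E) (hf : IsCochain V f)
    (hEV : ∀ x ∈ E, x ∈ V) {n N : ℕ} {Θ : Finset (Fin n → P)}
    (hΘ : ∀ θ ∈ Θ, (∀ i, θ i ∈ E) ∧ IsCone V ρ Γ N θ) :
    ∃ g : P → Γ, #Θ * ∑ h : H, #(badEdges f g (h • E)) ≤
      N * (n + 2).descFactorial 3 * #E ^ (n - 1) * ∑ h : H, #(badTriangles f (h • E)) := by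
  rcases Θ.eq_empty_or_nonempty with rfl | hne
  · exact ⟨1, by simp⟩
  choose! hθE pot hpot using hΘ
  let g (p : (Fin n → P) × H) (w : P) : Γ :=
    pot p.1 (fun x y => f (p.2 • x) (p.2 • y)) (p.2⁻¹ • w)
  obtain ⟨p, -, hp⟩ := exists_min_image (Θ ×ˢ univ)
    (fun p => ∑ h : H, #(badEdges f (g p) (h • E))) (hne.product univ_nonempty)
  refine ⟨g p, Nat.le_of_mul_le_mul_left ?_ (Fintype.card_pos (α := H))⟩
  calc Fintype.card H * (#Θ * ∑ h : H, #(badEdges f (g p) (h • E)))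
    _ = #(Θ ×ˢ (univ : Finset H)) • ∑ h : H, #(badEdges f (g p) (h • E)) := by
      rw [card_product, card_univ, smul_eq_mul]
      ring
    _ ≤ ∑ q ∈ Θ ×ˢ univ, ∑ h : H, #(badEdges f (g q) (h • E)) :=
      card_nsmul_le_sum _ (fun q => ∑ h : H, #(badEdges f (g q) (h • E))) _ hp
    _ ≤ ∑ θ ∈ Θ, Fintype.card H * (N * ∑ e ∈ E ×ˢ E,
          totalDefect H f (Matrix.vecCons e.1 (Matrix.vecCons e.2 θ))) := by
      rw [sum_product]
      exact sum_le_sum fun θ hθ =>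
        hH.sum_card_badEdges_le hf hEV (hθE θ hθ) (pot := pot θ) (hpot θ hθ)
    _ ≤ _ := by
      rw [← mul_sum, ← mul_sum, mul_assoc N, mul_assoc N]
      gcongr
      exact sum_totalDefect_le f hθE

end IsTypeTransitive

end Averaging

section SubspaceLattice

variable {F W : Type*} [DivisionRing F] [AddCommGroup W] [Module F W]

theorem finrank_linearEquiv_smul (e : W ≃ₗ[F] W) (x : Submodule F W) :
    Module.finrank F (e • x : Submodule F W) = Module.finrank F x :=
  e.finrank_map_eq x

variable [FiniteDimensional F W]

theorem isRank_finrank : IsRank fun x : Submodule F W => Module.finrank F x := by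
  refine ⟨Submodule.finrank_strictMono, fun x y => Submodule.finrank_sup_add_finrank_inf_eq x y,
    fun {x y i} hxy hxi => ?_⟩
  induction i, hxi using Nat.le_induction with
  | base => exact fun _ => ⟨x, le_rfl, hxy, rfl⟩
  | succ i _ ih =>
    intro hi
    obtain ⟨w, hxw, hwy, rfl⟩ := ih (Nat.le_of_succ_le hi)
    obtain ⟨v, hvy, hvw⟩ := SetLike.exists_of_lt (hwy.lt_of_ne (by rintro rfl; lia))
    exact ⟨w ⊔ Submodule.span F {v}, hxw.trans le_sup_left,
      sup_le hwy ((Submodule.span_singleton_le_iff_mem v y).2 hvy),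
      Submodule.finrank_sup_span_singleton hvw⟩

theorem exists_eqOn_id_smul_eq {x y z : Submodule F W} (hxy : x ≤ y) (hxz : x ≤ z)
    (h : Module.finrank F y = Module.finrank F z) :
    ∃ e : W ≃ₗ[F] W, e ∈ fixingSubgroup (W ≃ₗ[F] W) (x : Set W) ∧ e • y = z := by
  let f : y ≃ₗ[F] z := LinearEquiv.ofFinrankEq y z h
  let i := (f.submoduleMap (x.submoduleOf y)).symm ≪≫ₗ Submodule.submoduleOfEquivOfLe hxy ≪≫ₗ
    (Submodule.submoduleOfEquivOfLe hxz).symm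
  obtain ⟨g, hg⟩ := Submodule.exists_linearEquiv_restrict_eq i
  obtain ⟨e, he⟩ := Submodule.exists_linearEquiv_restrict_eq (f ≪≫ₗ g)
  refine ⟨e, fun ⟨v, hv⟩ => ?_, Submodule.eq_of_le_of_finrank_eq ?_ ?_⟩
  · let v' : x.submoduleOf y := ⟨⟨v, hxy hv⟩, hv⟩
    calc e v = g (f v') := (he v').symm
      _ = i (f.submoduleMap _ v') := congrArg Subtype.val (hg (f.submoduleMap _ v')).symm
      _ = v := by
        simp only [i, LinearEquiv.trans_apply, LinearEquiv.symm_apply_apply]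
        rfl
  · rintro _ ⟨v, hv, rfl⟩
    exact (he ⟨v, hv⟩) ▸ Subtype.prop _
  · rw [finrank_linearEquiv_smul, h]

theorem exists_smul_eq_of_monotoneOn (c : Finset (Submodule F W))
    (hc : IsChain (· ≤ ·) (c : Set (Submodule F W))) {φ : Submodule F W → Submodule F W}
    (hφ : MonotoneOn φ (c : Set (Submodule F W)))
    (hrank : ∀ x ∈ c, Module.finrank F (φ x) = Module.finrank F x) :
    ∃ e : W ≃ₗ[F] W, ∀ x ∈ c, e • x = φ x := by
  induction c using Finset.induction_on_max_value fun x : Submodule F W => Module.finrank F x with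
  | empty => exact ⟨1, by simp⟩
  | insert a c _ hmax ih =>
    obtain ⟨e, he⟩ := ih (hc.mono (by simp)) (hφ.mono (by simp))
      fun x hx => hrank x (mem_insert_of_mem hx)
    have hle : ∀ x ∈ c, x ≤ a := fun x hx => isRank_finrank.le_of_symmGen
      (hc.total (by simp [hx]) (by simp)) (hmax x hx)
    obtain ⟨k, hk, hka⟩ := exists_eqOn_id_smul_eq (x := c.sup φ) (y := e • a) (z := φ a)
      (Finset.sup_le fun x hx => he x hx ▸ smul_mono_right e (hle x hx))
      (Finset.sup_le fun x hx => hφ (by simp [hx]) (by simp) (hle x hx))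
      (by rw [finrank_linearEquiv_smul, hrank a (mem_insert_self a c)])
    refine ⟨k * e, forall_mem_insert _ _ _ |>.2 ⟨by rw [mul_smul, hka], fun x hx => ?_⟩⟩
    rw [mul_smul, he x hx]
    exact k.map_eq_of_mem_fixingSubgroup _ fun v => hk ⟨v, le_sup (f := φ) hx v.2⟩

theorem exists_smul_eq_of_isChain {c c' : Finset (Submodule F W)}
    (hc : IsChain (· ≤ ·) (c : Set (Submodule F W)))
    (hc' : IsChain (· ≤ ·) (c' : Set (Submodule F W)))
    (hcc' : ∀ x ∈ c, ∃ y ∈ c', Module.finrank F y = Module.finrank F x) :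
    ∃ e : W ≃ₗ[F] W, ∀ x ∈ c, ∀ y ∈ c', Module.finrank F x = Module.finrank F y → e • x = y := by
  choose! φ hφ hrank using hcc'
  obtain ⟨e, he⟩ := exists_smul_eq_of_monotoneOn c hc (φ := φ) (fun x hx y hy hxy =>
    isRank_finrank.le_of_symmGen (hc'.total (hφ x hx) (hφ y hy))
      (by simpa only [hrank x hx, hrank y hy] using Submodule.finrank_mono hxy)) hrank
  refine ⟨e, fun x hx y hy hxy => (he x hx).trans ?_⟩
  exact isRank_finrank.eq_of_symmGen (hc'.total (hφ x hx) hy) ((hrank x hx).trans hxy)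

theorem exists_mem_fixingSubgroup_smul_eq {s c c' : Finset (Submodule F W)}
    (hc : IsChain (· ≤ ·) (c : Set (Submodule F W)))
    (hc' : IsChain (· ≤ ·) (c' : Set (Submodule F W))) (hs : s ⊆ c) (hs' : s ⊆ c')
    (hcc' : ∀ x ∈ c, ∃ y ∈ c', Module.finrank F y = Module.finrank F x) :
    ∃ h : fixingSubgroup (W ≃ₗ[F] W) (s : Set (Submodule F W)),
      ∀ x ∈ c, ∀ y ∈ c', Module.finrank F x = Module.finrank F y → h • x = y := by
  obtain ⟨e, he⟩ := exists_smul_eq_of_isChain hc hc' hcc'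
  exact ⟨⟨e, fun x => he x (hs x.2) x (hs' x.2) rfl⟩, he⟩

end SubspaceLattice

section Link

variable {P : Type*}

/-- The vertices of the link of the chain `s` in the complex of chains of elements whose rank lies
in `S`. -/
def linkVertices [Preorder P] (ρ : P → ℕ) (S : Finset ℕ) (s : Finset P) : Set P :=
  {x | x ∉ s ∧ ρ x ∈ S ∧ ∀ w ∈ s, SymmGen (· ≤ ·) x w}

/-- The members of `s` below `x`. For a vertex `x` of the link of the chain `s`, they determine
the gap of `s` which contains `x`. -/
noncomputable def lowerPart [Preorder P] (s : Finset P) (x : P) : Finset P := {w ∈ s | w < x}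

theorem mem_lowerPart [Preorder P] {s : Finset P} {w x : P} : w ∈ lowerPart s x ↔ w ∈ s ∧ w < x :=
  mem_filter

section PartialOrder

variable [PartialOrder P] {ρ : P → ℕ} {S : Finset ℕ} {s : Finset P} {w x y : P}

theorem lt_or_gt_of_mem_linkVertices (hx : x ∈ linkVertices ρ S s) (hw : w ∈ s) :
    x < w ∨ w < x :=
  (hx.2.2 w hw).imp (fun h => h.lt_of_ne fun hxw => hx.1 (hxw ▸ hw))
    fun h => h.lt_of_ne fun hwx => hx.1 (hwx ▸ hw)

theorem symmGen_of_lowerPart_ne (hx : x ∈ linkVertices ρ S s) (hy : y ∈ linkVertices ρ S s)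
    (h : lowerPart s x ≠ lowerPart s y) : SymmGen (· ≤ ·) x y := by
  contrapose! h
  refine filter_congr fun w hw => ?_
  rcases lt_or_gt_of_mem_linkVertices hx hw with hxw | hwx <;>
    rcases lt_or_gt_of_mem_linkVertices hy hw with hyw | hwy
  · exact iff_of_false hxw.not_gt hyw.not_gt
  · exact absurd (hxw.trans hwy).le.symmGen h
  · exact absurd (hyw.trans hwx).le.symmGen_symm h
  · exact iff_of_true hwx hwy

end PartialOrder

variable [Lattice P] {ρ : P → ℕ} {s E : Finset P} {l t : ℕ} {e : P}

theorem isPart_lowerPart (hρ : IsRank ρ) {Z Y : P} {u : ℕ} (hZ : Z ∈ s) (hlZ : l ≤ ρ Z)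
    (hZu : ρ Z ≤ u) (hut : u ≤ t) (huY : u ≤ ρ Y) (hZe : Z < e) (heY : e ≤ Y)
    (hs : ∀ w ∈ s, w ≤ Z ∨ Y ≤ w ∧ u < ρ w)
    (hY : ∀ x ∈ linkVertices ρ (Icc l t) s, lowerPart s x = lowerPart s e → x ≤ Y ∧ ρ x ≤ u) :
    IsPart (linkVertices ρ (Icc l t) s)
      {x ∈ linkVertices ρ (Icc l t) s | lowerPart s x = lowerPart s e} ρ Z Y (u - ρ Z) := by
  have hlt_iff {x} (hZx : Z < x) (hxY : x ≤ Y) {w} (hw : w ∈ s) : w < x ↔ w ≤ Z :=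
    ⟨fun hwx => (hs w hw).resolve_right fun h => hwx.not_ge (hxY.trans h.1),
      fun hwZ => hwZ.trans_lt hZx⟩
  refine ⟨fun {x} => ⟨fun ⟨hx, hxe⟩ => ?_, fun ⟨hZx, hxY, hxu⟩ => ?_⟩, fun x hx => hx.1,
    fun x hx hxM y hy => symmGen_of_lowerPart_ne hx hy.1 fun h => hxM ⟨hx, h.trans hy.2⟩,
    hZe.le.trans heY, by lia⟩
  · rw [Nat.add_sub_cancel' hZu]
    exact ⟨(mem_lowerPart.1 (hxe ▸ mem_lowerPart.2 ⟨hZ, hZe⟩)).2, hY x hx hxe⟩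
  · rw [Nat.add_sub_cancel' hZu] at hxu
    have hZx_rank := hρ.strictMono hZx
    refine ⟨⟨fun hxs => ?_, mem_Icc.2 ⟨by lia, by lia⟩, fun w hw => ?_⟩,
      filter_congr fun w hw => (hlt_iff hZx hxY hw).trans (hlt_iff hZe heY hw).symm⟩
    · exact (hs x hxs).elim hZx.not_ge fun h => h.2.not_ge hxu
    · exact (hs w hw).elim (fun h => (h.trans hZx.le).symmGen_symm)
        fun h => (hxY.trans h.1).symmGen

theorem exists_isPart_of_lowerPart_nonempty [OrderTop P] (hρ : IsRank ρ)
    (hs : IsChain (· ≤ ·) (s : Set P)) (hsS : ∀ w ∈ s, ρ w ∈ Icc l t) (ht : t ≤ ρ ⊤)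
    (he : e ∈ linkVertices ρ (Icc l t) s) (hlower : (lowerPart s e).Nonempty) :
    ∃ Z Y m, IsPart (linkVertices ρ (Icc l t) s)
        {x ∈ linkVertices ρ (Icc l t) s | lowerPart s x = lowerPart s e} ρ Z Y m ∧
      (∀ x ∈ linkVertices ρ (Icc l t) s, SymmGen (· ≤ ·) x Z) ∧
      ∀ x ∈ linkVertices ρ (Icc l t) s, SymmGen (· ≤ ·) x Y := by
  obtain ⟨Z, hZ, hZmax⟩ := exists_max_image _ ρ hlower
  obtain ⟨hZs, hZe⟩ := mem_lowerPart.1 hZ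
  have hle_Z {w} (hw : w ∈ s) (hwe : w < e) : w ≤ Z :=
    hρ.le_of_symmGen (hs.total hw hZs) (hZmax w (mem_lowerPart.2 ⟨hw, hwe⟩))
  have hlZ := (mem_Icc.1 (hsS Z hZs)).1
  rcases ({w ∈ s | e < w}).eq_empty_or_nonempty with hempty | hupper
  · have hlt {w} (hw : w ∈ s) : w < e :=
      (lt_or_gt_of_mem_linkVertices he hw).resolve_left (filter_eq_empty_iff.1 hempty hw)
    exact ⟨Z, ⊤, _, isPart_lowerPart hρ hZs hlZ (mem_Icc.1 (hsS Z hZs)).2 le_rfl ht hZe le_top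
      (fun w hw => .inl (hle_Z hw (hlt hw))) fun x hx _ => ⟨le_top, (mem_Icc.1 hx.2.1).2⟩,
      fun x hx => hx.2.2 Z hZs, fun x _ => le_top.symmGen⟩
  · obtain ⟨Y, hY, hYmin⟩ := exists_min_image _ ρ hupper
    obtain ⟨hYs, heY⟩ := mem_filter.1 hY
    have hrank := hρ.strictMono (hZe.trans heY)
    have hYt := (mem_Icc.1 (hsS Y hYs)).2
    refine ⟨Z, Y, _, isPart_lowerPart (u := ρ Y - 1) hρ hZs hlZ (by lia) (by lia) (by lia) hZe
      heY.le (fun w hw => (lt_or_gt_of_mem_linkVertices he hw).symm.imp (hle_Z hw) fun hew => ?_)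
      fun x hx hxe => ?_, fun x hx => hx.2.2 Z hZs, fun x hx => hx.2.2 Y hYs⟩
    · have hYw := hYmin w (mem_filter.2 ⟨hw, hew⟩)
      exact ⟨hρ.le_of_symmGen (hs.total hYs hw) hYw, by lia⟩
    · have hxY : x < Y := (lt_or_gt_of_mem_linkVertices hx hYs).resolve_right fun hYx =>
        heY.not_gt (mem_lowerPart.1 (hxe ▸ mem_lowerPart.2 ⟨hYs, hYx⟩)).2
      exact ⟨hxY.le, Nat.le_sub_one_of_lt (hρ.strictMono hxY)⟩

/-- The elements below the smallest member `Z` of `s` form a part of the dual lattice, where they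
are the elements above `Z`. -/
theorem exists_isPart_dual_of_lowerPart_eq_empty [BoundedOrder P] (hρ : IsRank ρ)
    (hs : IsChain (· ≤ ·) (s : Set P)) (hsS : ∀ w ∈ s, ρ w ∈ Icc l t) (hne : s.Nonempty)
    (hl : ρ ⊥ ≤ l) (hlower : lowerPart s e = ∅) :
    ∃ Z ∈ s, IsPart (ofDual ⁻¹' linkVertices ρ (Icc l t) s)
      (ofDual ⁻¹' {x ∈ linkVertices ρ (Icc l t) s | lowerPart s x = lowerPart s e})
      (fun x => ρ ⊤ - ρ (ofDual x)) (toDual Z) (toDual ⊥) (ρ Z - l) := by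
  obtain ⟨Z, hZ, hZmin⟩ := exists_min_image s ρ hne
  have hZle {w} (hw : w ∈ s) : Z ≤ w := hρ.le_of_symmGen (hs.total hZ hw) (hZmin w hw)
  have htop (x : P) : ρ x ≤ ρ ⊤ := hρ.strictMono.monotone le_top
  obtain ⟨hlZ, hZt⟩ := mem_Icc.1 (hsS Z hZ)
  refine ⟨Z, hZ, fun {x} => ⟨fun ⟨hx, hxe⟩ => ?_, fun ⟨hZx, _, hrank⟩ => ?_⟩, fun x hx => hx.1,
    fun x hx hxM y hy => ?_,
    toDual_le_toDual.2 bot_le, ?_⟩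
  · have hxZ := (lt_or_gt_of_mem_linkVertices hx hZ).resolve_right
      (filter_eq_empty_iff.1 (hxe.trans hlower) hZ)
    have := htop (ofDual x)
    have := (mem_Icc.1 hx.2.1).1
    have := hρ.strictMono hxZ
    exact ⟨hxZ, bot_le (a := ofDual x), by simp only [ofDual_toDual]; lia⟩
  · have hxZ : ofDual x < Z := hZx
    have := htop Z
    have := hρ.strictMono hxZ
    simp only [ofDual_toDual] at hrank
    refine ⟨⟨fun hx => hxZ.not_ge (hZle hx), mem_Icc.2 ⟨by lia, by lia⟩, fun w hw =>
      (hxZ.le.trans (hZle hw)).symmGen⟩, (filter_eq_empty_iff.2 fun w hw hwx => ?_).trans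
        hlower.symm⟩
    exact (hwx.trans hxZ).not_ge (hZle hw)
  · exact (symmGen_of_lowerPart_ne (x := ofDual x) (y := ofDual y) hx hy.1
      fun h => hxM ⟨hx, h.trans hy.2⟩).symm
  · have := htop Z
    simp only [ofDual_toDual]
    lia

theorem IsPart.hasManyCones_of_injOn {V M : Set P} [DecidablePred (· ∈ M)] {Z Y : P} {m : ℕ}
    (h : IsPart V M ρ Z Y m) (hρ : IsRank ρ) (hEV : ∀ x ∈ E, x ∈ V)
    (hVE : ∀ x ∈ V, ∃ e ∈ E, ρ e = ρ x)
    (hinj : Set.InjOn ρ E) (hZ : ∀ x ∈ V, SymmGen (· ≤ ·) x Z)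
    (hY : ∀ x ∈ V, SymmGen (· ≤ ·) x Y) (hE : 3 ≤ #E) (hM : 2 ≤ #{x ∈ E | x ∈ M})
    (hEM : #E ≤ 5 * #{x ∈ E | x ∈ M}) (Γ : Type*) [Group Γ] : HasManyCones V ρ Γ E := by
  have hcard : #{x ∈ E | x ∈ M} ≤ m := by
    have hmaps : ∀ x ∈ ({x ∈ E | x ∈ M} : Finset P), ρ x ∈ Ioc (ρ Z) (ρ Z + m) := fun x hx =>
      mem_Ioc.2 ⟨h.lt_rank hρ (mem_filter.1 hx).2, h.rank_le_of_mem (mem_filter.1 hx).2⟩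
    simpa using card_le_card_of_injOn ρ hmaps (hinj.mono (coe_subset.2 (filter_subset _ _)))
  refine h.hasManyCones hρ (fun i hi him => ?_) hEV (hEM.trans (by lia)) (hM.trans hcard)
    fun hm2 => ?_
  · obtain ⟨w, hw, -, rfl⟩ := h.exists_ge hρ le_rfl h.le hi him hi.le
    obtain ⟨e, he, hew⟩ := hVE w (h.subset hw)
    have hZe : Z < e := (hρ.le_of_symmGen (hZ e (hEV e he)).symm (by lia)).lt_of_ne
      (by rintro rfl; lia)
    have heY : e ≤ Y := hρ.le_of_symmGen (hY e (hEV e he)) (by have := h.rank_le; lia)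
    exact ⟨e, he, h.mem_iff.2 ⟨hZe, heY, by lia⟩, hew⟩
  · by_contra! hsub
    rw [filter_true_of_mem hsub] at hcard
    lia

theorem hasManyCones_linkVertices [BoundedOrder P] (hρ : IsRank ρ)
    (hs : IsChain (· ≤ ·) (s : Set P)) (hsS : ∀ w ∈ s, ρ w ∈ Icc l t) (hne : s.Nonempty)
    (hl : ρ ⊥ ≤ l) (ht : t ≤ ρ ⊤) (hEV : ∀ x ∈ E, x ∈ linkVertices ρ (Icc l t) s)
    (hVE : ∀ x ∈ linkVertices ρ (Icc l t) s, ∃ e ∈ E, ρ e = ρ x) (hinj : Set.InjOn ρ E)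
    (hE : 3 ≤ #E) (Γ : Type*) [Group Γ] :
    HasManyCones (linkVertices ρ (Icc l t) s) ρ Γ E := by
  refine hasManyCones_of_key (key := lowerPart s) (fun x hx y hy => symmGen_of_lowerPart_ne hx hy)
    hEV hE fun e he htwo hfive => ?_
  set M := {x ∈ linkVertices ρ (Icc l t) s | lowerPart s x = lowerPart s e}
  have hM : ∀ x ∈ E, lowerPart s x = lowerPart s e ↔ x ∈ M := fun x hx =>
    (and_iff_right (hEV x hx)).symm
  replace htwo : 2 ≤ #{x ∈ E | x ∈ M} := htwo.trans_eq (congrArg card (filter_congr hM))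
  replace hfive : #E ≤ 5 * #{x ∈ E | x ∈ M} :=
    hfive.trans_eq (congrArg (5 * #·) (filter_congr hM))
  rcases (lowerPart s e).eq_empty_or_nonempty with hempty | hlower
  · obtain ⟨Z, hZ, h⟩ := exists_isPart_dual_of_lowerPart_eq_empty hρ hs hsS hne hl hempty
    have hrank {x y : P} (hxy : ρ ⊤ - ρ x = ρ ⊤ - ρ y) : ρ x = ρ y := by
      have htop (x : P) : ρ x ≤ ρ ⊤ := hρ.strictMono.monotone le_top
      have := htop x
      have := htop y
      lia
    have hfilter : #{x ∈ E.map toDual.toEmbedding | x ∈ ofDual ⁻¹' M} = #{x ∈ E | x ∈ M} := by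
      rw [filter_map, card_map]
      exact congrArg card (filter_congr fun _ _ => .rfl)
    refine .of_dual (fun x y => hrank) <| h.hasManyCones_of_injOn hρ.dual
      (by simpa using hEV) (fun x hx => ?_) ?_ (fun x hx => (hx.2.2 Z hZ).symm)
      (fun x _ => .of_rel (bot_le (a := ofDual x))) (by rwa [card_map]) (by rwa [hfilter])
      (by rwa [hfilter, card_map]) Γ
    · obtain ⟨e, he, hex⟩ := hVE (ofDual x) hx
      exact ⟨toDual e, mem_map_of_mem _ he, congrArg (ρ ⊤ - ·) hex⟩
    · rw [coe_map]
      rintro _ ⟨x, hx, rfl⟩ _ ⟨y, hy, rfl⟩ hxy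
      exact congrArg toDual (hinj hx hy (hrank hxy))
  · obtain ⟨Z, Y, m, h, hZ, hY⟩ :=
      exists_isPart_of_lowerPart_nonempty hρ hs hsS ht (hEV e he) hlower
    exact h.hasManyCones_of_injOn hρ hEV hVE hinj hZ hY hE htwo hfive Γ

end Link

section Counting

theorem card_nsmul_sum_eq_of_transitive {H X M : Type*} [Group H] [Fintype H] [MulAction H X]
    [AddCommMonoid M] {A : Finset X} (hA : ∀ h : H, ∀ x ∈ A, h • x ∈ A) {a : X}
    (ha : ∀ x ∈ A, ∃ h : H, h • a = x) (φ : X → M) :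
    Fintype.card H • ∑ x ∈ A, φ x = #A • ∑ h : H, φ (h • a) := by
  have hsum (h : H) : ∑ x ∈ A, φ x = ∑ x ∈ A, φ (h • x) :=
    sum_bij' (fun x _ => h⁻¹ • x) (fun x _ => h • x) (fun x => hA h⁻¹ x) (fun x => hA h x)
      (by simp) (by simp) (by simp)
  calc Fintype.card H • ∑ x ∈ A, φ x
    _ = ∑ h : H, ∑ x ∈ A, φ (h • x) := by simp [← hsum]
    _ = ∑ x ∈ A, ∑ h : H, φ (h • x) := sum_comm
    _ = ∑ _x ∈ A, ∑ h : H, φ (h • a) := sum_congr rfl fun x hx => by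
      obtain ⟨k, rfl⟩ := ha x hx
      simpa only [← mul_smul] using! Equiv.sum_comp (Equiv.mulRight k) fun h => φ (h • a)
    _ = _ := sum_const _

theorem HasManyCones.exists_card_mul_sum_le {H P Γ : Type*} [Group H] [Fintype H] [MulAction H P]
    [Group Γ] [PartialOrder P] {V : Set P} {ρ : P → ℕ} {E : Finset P} {f : P → P → Γ}
    (hE : HasManyCones V ρ Γ E) (hH : IsTypeTransitive H V ρ E) (hf : IsCochain V f)
    (hEV : ∀ x ∈ E, x ∈ V) :
    ∃ g : P → Γ, #E * ∑ h : H, #(badEdges f g (h • E)) ≤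
      11 * 210 * 100 ^ 5 * ∑ h : H, #(badTriangles f (h • E)) := by
  obtain ⟨Θ, hΘ, hcard⟩ := hE
  obtain ⟨g, hg⟩ := hH.exists_sum_card_badEdges_le hf hEV hΘ
  refine ⟨g, ?_⟩
  rcases (#E).eq_zero_or_pos with h0 | hpos
  · simp [h0]
  refine Nat.le_of_mul_le_mul_left ?_ (pow_pos hpos 4)
  calc #E ^ 4 * (#E * ∑ h : H, #(badEdges f g (h • E)))
    _ = #E ^ 5 * ∑ h : H, #(badEdges f g (h • E)) := by ring
    _ ≤ 100 ^ 5 * #Θ * ∑ h : H, #(badEdges f g (h • E)) := Nat.mul_le_mul_right _ hcard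
    _ = 100 ^ 5 * (#Θ * ∑ h : H, #(badEdges f g (h • E))) := mul_assoc ..
    _ ≤ 100 ^ 5 * (11 * 210 * #E ^ 4 * ∑ h : H, #(badTriangles f (h • E))) :=
      Nat.mul_le_mul_left _ hg
    _ = _ := by ring

variable {P Γ : Type*} [PartialOrder P] [Group Γ] {V : Set P} {f : P → P → Γ} {E : Finset P}

theorem IsCochain.card_filter_powersetCard_two_le (hf : IsCochain V f) (hEV : ∀ x ∈ E, x ∈ V)
    (hE : IsChain (· ≤ ·) (E : Set P)) (g : P → Γ) :
    #{e ∈ E.powersetCard 2 | ∃ u ∈ e, ∃ v ∈ e, u ≠ v ∧ f u v ≠ g u * (g v)⁻¹} ≤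
      #(badEdges f g E) := by
  refine card_le_card_of_surjOn (fun p => {p.1, p.2}) fun e he => ?_
  obtain ⟨he, u, hu, v, hv, huv, hbad⟩ := mem_filter.1 he
  obtain ⟨heE, he2⟩ := mem_powersetCard.1 he
  have he_eq : e = {u, v} :=
    (eq_of_subset_of_card_le (insert_subset hu (singleton_subset_iff.2 hv))
      (by rw [he2, card_pair huv])).symm
  rcases hE.total (heE hu) (heE hv) with hle | hle
  · refine ⟨(u, v), ?_, he_eq.symm⟩
    simpa [badEdges, heE hu, heE hv, hbad] using hle.lt_of_ne huv
  · refine ⟨(v, u), ?_, (pair_comm v u).trans he_eq.symm⟩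
    have hinv := hf.inv u (hEV u (heE hu)) v (hEV v (heE hv)) hle.symmGen_symm
    have hbad' : f v u ≠ g v * (g u)⁻¹ := fun h => hbad (by simp [hinv, h])
    simpa [badEdges, heE hu, heE hv, hbad'] using hle.lt_of_ne huv.symm

theorem IsCochain.card_badTriangles_le (hf : IsCochain V f) (hEV : ∀ x ∈ E, x ∈ V)
    (hE : IsChain (· ≤ ·) (E : Set P)) :
    #(badTriangles f E) ≤ 27 * #{e ∈ E.powersetCard 3 | ∃ u ∈ e, ∃ v ∈ e, ∃ w ∈ e,
      u ≠ v ∧ v ≠ w ∧ u ≠ w ∧ f u v * f v w * f w u ≠ 1} := by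
  refine card_le_mul_card_image_of_maps_to (f := fun σ => {σ 0, σ 1, σ 2}) (fun σ hσ => ?_)
    27 fun e he => ?_
  · obtain ⟨hσE, hbad⟩ := mem_filter.1 hσ
    have hmem := Fintype.mem_piFinset.1 hσE
    have hdist : σ 0 ≠ σ 1 ∧ σ 1 ≠ σ 2 ∧ σ 0 ≠ σ 2 := by
      contrapose! hbad
      refine hf.isFlat_of_eq ⟨⟨hEV _ (hmem 0), hEV _ (hmem 1), hEV _ (hmem 2)⟩,
        hE.total (hmem 0) (hmem 1), hE.total (hmem 1) (hmem 2), hE.total (hmem 0) (hmem 2)⟩ ?_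
      simp only
      tauto
    refine mem_filter.2 ⟨mem_powersetCard.2 ⟨by simp [insert_subset_iff, hmem],
      card_eq_three.2 ⟨_, _, _, hdist.1, hdist.2.2, hdist.2.1, rfl⟩⟩, ?_⟩
    exact ⟨σ 0, by simp, σ 1, by simp, σ 2, by simp, hdist.1, hdist.2.1, hdist.2.2, hbad⟩
  · have he3 : #e = 3 := (mem_powersetCard.1 (mem_filter.1 he).1).2
    calc _ ≤ #(Fintype.piFinset fun _ : Fin 3 => e) := card_le_card fun σ hσ => by
          obtain ⟨-, rfl⟩ := mem_filter.1 hσ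
          simp [Fintype.mem_piFinset, Fin.forall_fin_succ]
      _ = 27 := by simp [he3]

end Counting

section FixingSubgroup

theorem fixingSubgroup_smul_finset {H X : Type*} [Group H] [MulAction H X] {s : Finset X}
    (h : fixingSubgroup H (s : Set X)) : h • s = s :=
  (image_congr ((mem_fixingSubgroup_iff _).1 h.2)).trans image_id'

theorem isChain_insert_of_mem_triangles {P : Type*} [PartialOrder P] {ρ : P → ℕ} {S : Finset ℕ}
    {s : Finset P} (hs : IsChain (· ≤ ·) (s : Set P)) {t : P × P × P}
    (ht : t ∈ triangles (linkVertices ρ S s)) :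
    IsChain (· ≤ ·) (↑(insert t.1 (insert t.2.1 (insert t.2.2 s))) : Set P) := by
  obtain ⟨⟨hx, hy, hz⟩, hxy, hyz, hxz⟩ := ht
  push_cast
  refine ((hs.insert fun w hw _ => hz.2.2 w hw).insert ?_).insert ?_
  · rintro w (rfl | hw) -
    exacts [hyz, hy.2.2 w hw]
  · rintro w (rfl | rfl | hw) -
    exacts [hxy, hxz, hx.2.2 w hw]

variable {F W : Type*} [DivisionRing F] [AddCommGroup W] [Module F W]
  {S : Finset ℕ} {s E : Finset (Submodule F W)}

theorem smul_mem_linkVertices (h : fixingSubgroup (W ≃ₗ[F] W) (s : Set (Submodule F W)))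
    {x : Submodule F W} (hx : x ∈ linkVertices (fun x : Submodule F W => Module.finrank F x) S s) :
    h • x ∈ linkVertices (fun x : Submodule F W => Module.finrank F x) S s := by
  have hfix : ∀ w ∈ s, h • w = w := fun w => (mem_fixingSubgroup_iff _).1 h.2 w
  refine ⟨fun hxs => hx.1 ?_, by simpa [Subgroup.smul_def, finrank_linearEquiv_smul] using hx.2.1,
    fun w hw => ?_⟩
  · exact smul_left_cancel h (hfix _ hxs) ▸ hxs
  · rw [← hfix w hw]
    exact (hx.2.2 w hw).imp (smul_mono_right h.1 ·) (smul_mono_right h.1 ·)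

theorem isTypeTransitive_fixingSubgroup [FiniteDimensional F W]
    (hE : IsChain (· ≤ ·) (↑(E ∪ s) : Set (Submodule F W))) :
    IsTypeTransitive (fixingSubgroup (W ≃ₗ[F] W) (s : Set (Submodule F W)))
      (linkVertices (fun x : Submodule F W => Module.finrank F x) S s)
      (fun x => Module.finrank F x) E where
  smul_le h _ _ hxy := smul_mono_right h.1 hxy
  smul_mem := smul_mem_linkVertices
  rank_smul h x := finrank_linearEquiv_smul h.1 x
  exists_smul_eq := by
    rintro ⟨x, y, z⟩ ht x' hx' y' hy' z' hz' hxx' hyy' hzz'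
    have hs : IsChain (· ≤ ·) (s : Set (Submodule F W)) := hE.mono (by simp)
    obtain ⟨h, hh⟩ := exists_mem_fixingSubgroup_smul_eq (s := s)
      (c' := insert x' (insert y' (insert z' s))) (isChain_insert_of_mem_triangles hs ht)
      (hE.mono (by simp [Set.insert_subset_iff, *])) (fun w hw => by simp [hw])
      (fun w hw => by simp [hw]) (by simp; grind)
    refine ⟨h, Prod.ext (hh x ?_ x' ?_ hxx') (Prod.ext (hh y ?_ y' ?_ hyy') (hh z ?_ z' ?_ hzz'))⟩
    all_goals simp

end FixingSubgroup

section MaxFaces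

variable {F : Type} [Field F] [Fintype F] {n : ℕ} {S : Finset ℕ}
  {s T T' : Finset (Submodule F (Fin n → F))}

namespace IsMaxFlagFace

theorem injOn_finrank (hT : IsMaxFlagFace F n S T) :
    Set.InjOn (fun x : Submodule F (Fin n → F) => Module.finrank F x) T :=
  fun _ hx _ hy hxy => isRank_finrank.eq_of_symmGen (hT.1.1.total hx hy) hxy

theorem card_eq (hT : IsMaxFlagFace F n S T) : #T = #S := by
  rw [← card_image_of_injOn hT.injOn_finrank]
  refine congrArg card (Subset.antisymm (image_subset_iff.2 hT.1.2) fun i hi => ?_)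
  exact mem_image.2 (hT.2 i hi)

theorem mem_linkVertices (hT : IsMaxFlagFace F n S T) (hs : s ⊆ T) {x : Submodule F (Fin n → F)}
    (hx : x ∈ T \ s) :
    x ∈ linkVertices (fun x : Submodule F (Fin n → F) => Module.finrank F x) S s := by
  obtain ⟨hxT, hxs⟩ := mem_sdiff.1 hx
  exact ⟨hxs, hT.1.2 x hxT, fun w hw => hT.1.1.total hxT (hs hw)⟩

theorem exists_mem_sdiff_finrank_eq (hT : IsMaxFlagFace F n S T) {x : Submodule F (Fin n → F)}
    (hx : x ∈ linkVertices (fun x : Submodule F (Fin n → F) => Module.finrank F x) S s) :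
    ∃ y ∈ T \ s, Module.finrank F y = Module.finrank F x := by
  obtain ⟨y, hyT, hyx⟩ := hT.2 _ hx.2.1
  refine ⟨y, mem_sdiff.2 ⟨hyT, fun hys => hx.1 ?_⟩, hyx⟩
  exact isRank_finrank.eq_of_symmGen (hx.2.2 y hys) hyx.symm ▸ hys

theorem smul (hT : IsMaxFlagFace F n S T) (e : (Fin n → F) ≃ₗ[F] (Fin n → F)) :
    IsMaxFlagFace F n S (e • T) := by
  refine ⟨⟨?_, ?_⟩, fun i hi => ?_⟩
  · rw [coe_smul_finset]
    exact hT.1.1.image_of_map_rel _ _ _ fun _ _ hxy => smul_mono_right e hxy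
  · intro y hy
    obtain ⟨x, hx, rfl⟩ := mem_smul_finset.1 hy
    exact (finrank_linearEquiv_smul e x).symm ▸ hT.1.2 x hx
  · obtain ⟨x, hx, rfl⟩ := hT.2 i hi
    exact ⟨e • x, smul_mem_smul_finset hx, finrank_linearEquiv_smul e x⟩

end IsMaxFlagFace

theorem mem_maxFacesAbove : T ∈ maxFacesAbove F n S s ↔ IsMaxFlagFace F n S T ∧ s ⊆ T :=
  mem_filter_univ T

theorem smul_mem_maxFacesAbove
    (h : fixingSubgroup ((Fin n → F) ≃ₗ[F] (Fin n → F)) (s : Set (Submodule F (Fin n → F))))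
    (hT : T ∈ maxFacesAbove F n S s) : h • T ∈ maxFacesAbove F n S s := by
  obtain ⟨hT, hs⟩ := mem_maxFacesAbove.1 hT
  refine mem_maxFacesAbove.2 ⟨hT.smul h.1, ?_⟩
  exact (fixingSubgroup_smul_finset h).symm.trans_subset (smul_finset_subset_smul_finset hs)

theorem exists_smul_eq_of_mem_maxFacesAbove (hT : T ∈ maxFacesAbove F n S s)
    (hT' : T' ∈ maxFacesAbove F n S s) :
    ∃ h : fixingSubgroup ((Fin n → F) ≃ₗ[F] (Fin n → F)) (s : Set (Submodule F (Fin n → F))),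
      h • T = T' := by
  obtain ⟨hT, hs⟩ := mem_maxFacesAbove.1 hT
  obtain ⟨hT', hs'⟩ := mem_maxFacesAbove.1 hT'
  obtain ⟨h, hh⟩ := exists_mem_fixingSubgroup_smul_eq hT.1.1 hT'.1.1 hs hs'
    fun x hx => hT'.2 _ (hT.1.2 x hx)
  refine ⟨h, eq_of_subset_of_card_le (fun y hy => ?_) ?_⟩
  · obtain ⟨x, hx, rfl⟩ := mem_smul_finset.1 hy
    obtain ⟨y, hy, hyx⟩ := hT'.2 _ (hT.1.2 x hx)
    exact hh x hx y hy hyx.symm ▸ hy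
  · rw [card_smul_finset, hT.card_eq, hT'.card_eq]

variable {Γ : Type*} [Group Γ] {l t : ℕ} {f : Submodule F (Fin n → F) → Submodule F (Fin n → F) → Γ}

theorem exists_sum_card_badEdges_sdiff_le (hs : IsFlagFace F n (Icc l t) s) (hne : s.Nonempty)
    (ht : t ≤ n) (hcard : #s + 3 ≤ #(Icc l t))
    (hf : IsCochain (linkVertices (fun x : Submodule F (Fin n → F) => Module.finrank F x)
      (Icc l t) s) f) :
    ∃ g : Submodule F (Fin n → F) → Γ,
      (#(Icc l t) - #s) * ∑ T ∈ maxFacesAbove F n (Icc l t) s, #(badEdges f g (T \ s)) ≤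
        11 * 210 * 100 ^ 5 *
          ∑ T ∈ maxFacesAbove F n (Icc l t) s, #(badTriangles f (T \ s)) := by
  rcases (maxFacesAbove F n (Icc l t) s).eq_empty_or_nonempty with hempty | ⟨T₀, hT₀⟩
  · exact ⟨1, by simp [hempty]⟩
  obtain ⟨hmax, hsT₀⟩ := mem_maxFacesAbove.1 hT₀
  let H := fixingSubgroup ((Fin n → F) ≃ₗ[F] (Fin n → F)) (s : Set (Submodule F (Fin n → F)))
  have : Finite ((Fin n → F) ≃ₗ[F] (Fin n → F)) := DFunLike.finite _
  have : Fintype H := Fintype.ofFinite H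
  have hE : #(T₀ \ s) = #(Icc l t) - #s := by rw [card_sdiff_of_subset hsT₀, hmax.card_eq]
  have hcones := hasManyCones_linkVertices (E := T₀ \ s) isRank_finrank hs.1 hs.2 hne (by simp)
    (by simpa using ht) (fun x => hmax.mem_linkVertices hsT₀)
    (fun x => hmax.exists_mem_sdiff_finrank_eq) (hmax.injOn_finrank.mono (by simp)) (by lia) Γ
  obtain ⟨g, hg⟩ := hcones.exists_card_mul_sum_le (H := H)
    (isTypeTransitive_fixingSubgroup (by rw [sdiff_union_of_subset hsT₀]; exact hmax.1.1)) hf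
    fun x => hmax.mem_linkVertices hsT₀
  have hsmul (h : H) : h • (T₀ \ s) = (h • T₀) \ s :=
    (smul_finset_sdiff ..).trans (congrArg _ (fixingSubgroup_smul_finset h))
  have horbit (φ : Finset (Submodule F (Fin n → F)) → ℕ) :
      Fintype.card H * ∑ T ∈ maxFacesAbove F n (Icc l t) s, φ (T \ s) =
        #(maxFacesAbove F n (Icc l t) s) * ∑ h : H, φ (h • (T₀ \ s)) := by
    simpa only [hsmul, smul_eq_mul] using
      card_nsmul_sum_eq_of_transitive (fun h : H => fun _ => smul_mem_maxFacesAbove h)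
        (fun _ => exists_smul_eq_of_mem_maxFacesAbove hT₀) fun T => φ (T \ s)
  refine ⟨g, Nat.le_of_mul_le_mul_left ?_ (Fintype.card_pos (α := H))⟩
  rw [← hE, Nat.mul_left_comm, Nat.mul_left_comm _ (11 * 210 * 100 ^ 5),
    horbit fun E => #(badEdges f g E), horbit fun E => #(badTriangles f E),
    Nat.mul_left_comm #(T₀ \ s), Nat.mul_left_comm (11 * 210 * 100 ^ 5)]
  exact Nat.mul_le_mul_left _ hg

end MaxFaces

section LinkWeights

variable {F : Type} [Field F] [Fintype F] {n : ℕ} {S : Finset ℕ}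
  {s : Finset (Submodule F (Fin n → F))} {Γ : Type} [Group Γ] {l t : ℕ}
  {f f' : Submodule F (Fin n → F) → Submodule F (Fin n → F) → Γ}

theorem card_sdiff_of_mem_maxFacesAbove {T : Finset (Submodule F (Fin n → F))}
    (hT : T ∈ maxFacesAbove F n S s) : #(T \ s) = #S - #s := by
  obtain ⟨hT, hs⟩ := mem_maxFacesAbove.1 hT
  rw [card_sdiff_of_subset hs, hT.card_eq]

theorem linkDist_eq (f : Submodule F (Fin n → F) → Submodule F (Fin n → F) → Γ)
    (g : Submodule F (Fin n → F) → Γ) :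
    linkDist F n S s Γ f g =
      (∑ T ∈ maxFacesAbove F n S s, #{e ∈ (T \ s).powersetCard 2 |
        ∃ u ∈ e, ∃ v ∈ e, u ≠ v ∧ f u v ≠ g u * (g v)⁻¹} : ℕ) /
      ((#S - #s).choose 2 * #(maxFacesAbove F n S s) : ℕ) := by
  rw [linkDist, Nat.cast_mul, ← div_div, Nat.cast_sum]
  refine congrArg (· / _) ((sum_congr rfl fun T hT => ?_).trans (sum_div ..).symm)
  rw [sum_boole, card_powersetCard, card_sdiff_of_mem_maxFacesAbove hT]

theorem linkWt_eq (f : Submodule F (Fin n → F) → Submodule F (Fin n → F) → Γ) :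
    linkWt F n S s Γ f =
      (∑ T ∈ maxFacesAbove F n S s, #{e ∈ (T \ s).powersetCard 3 |
        ∃ u ∈ e, ∃ v ∈ e, ∃ w ∈ e, u ≠ v ∧ v ≠ w ∧ u ≠ w ∧ f u v * f v w * f w u ≠ 1} : ℕ) /
      ((#S - #s).choose 3 * #(maxFacesAbove F n S s) : ℕ) := by
  rw [linkWt, Nat.cast_mul, ← div_div, Nat.cast_sum]
  refine congrArg (· / _) ((sum_congr rfl fun T hT => ?_).trans (sum_div ..).symm)
  rw [sum_boole, card_powersetCard, card_sdiff_of_mem_maxFacesAbove hT]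

theorem linkDist_congr (h : ∀ x y, x ≠ y → f x y = f' x y) (g : Submodule F (Fin n → F) → Γ) :
    linkDist F n S s Γ f g = linkDist F n S s Γ f' g := by
  have hiff (u v) : u ≠ v ∧ f u v ≠ g u * (g v)⁻¹ ↔ u ≠ v ∧ f' u v ≠ g u * (g v)⁻¹ :=
    and_congr_right fun huv => by rw [h u v huv]
  simp only [linkDist, hiff]

theorem linkWt_congr (h : ∀ x y, x ≠ y → f x y = f' x y) :
    linkWt F n S s Γ f = linkWt F n S s Γ f' := by
  have hiff (u v w) : u ≠ v ∧ v ≠ w ∧ u ≠ w ∧ f u v * f v w * f w u ≠ 1 ↔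
      u ≠ v ∧ v ≠ w ∧ u ≠ w ∧ f' u v * f' v w * f' w u ≠ 1 :=
    and_congr_right fun huv => and_congr_right fun hvw => and_congr_right fun huw => by
      rw [h u v huv, h v w hvw, h w u huw.symm]
  simp only [linkWt, hiff]

theorem div_choose_two_le_mul_div_choose_three {r a b K : ℕ} (M : ℕ) (hr : 3 ≤ r)
    (h : r * a ≤ 3 * K * b) :
    (a : ℝ) / (r.choose 2 * M : ℕ) ≤ K * ((b : ℝ) / (r.choose 3 * M : ℕ)) := by
  rcases M.eq_zero_or_pos with rfl | hM
  · simp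
  have h2 := Nat.choose_pos (show 2 ≤ r by lia)
  have h3 := Nat.choose_pos hr
  have hchoose : 3 * r.choose 3 ≤ r * r.choose 2 := by
    have := Nat.choose_succ_right_eq r 2
    nlinarith [Nat.sub_le r 2]
  rw [← mul_div_assoc, div_le_div_iff₀ (by positivity) (by positivity)]
  norm_cast
  refine Nat.le_of_mul_le_mul_left (c := 3) ?_ (by norm_num)
  calc 3 * (a * (r.choose 3 * M))
    _ = 3 * r.choose 3 * a * M := by ring
    _ ≤ r * r.choose 2 * a * M := by gcongr
    _ = r * a * (r.choose 2 * M) := by ring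
    _ ≤ 3 * K * b * (r.choose 2 * M) := by gcongr
    _ = _ := by ring

theorem IsCochain.exists_linkDist_le
    (hf : IsCochain (linkVertices (fun x : Submodule F (Fin n → F) => Module.finrank F x)
      (Icc l t) s) f) (hs : IsFlagFace F n (Icc l t) s) (hne : s.Nonempty) (ht : t ≤ n)
    (hcard : #s + 3 ≤ #(Icc l t)) :
    ∃ g : Submodule F (Fin n → F) → Γ, linkDist F n (Icc l t) s Γ f g ≤
      (9 * (11 * 210 * 100 ^ 5) : ℕ) * linkWt F n (Icc l t) s Γ f := by
  obtain ⟨g, hg⟩ := exists_sum_card_badEdges_sdiff_le hs hne ht hcard hf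
  refine ⟨g, ?_⟩
  rw [linkDist_eq, linkWt_eq]
  refine div_choose_two_le_mul_div_choose_three _ (by lia) ?_
  have hlink {T} (hT : T ∈ maxFacesAbove F n (Icc l t) s) (x) (hx : x ∈ T \ s) :=
    (mem_maxFacesAbove.1 hT).1.mem_linkVertices (mem_maxFacesAbove.1 hT).2 hx
  have hchain {T} (hT : T ∈ maxFacesAbove F n (Icc l t) s) :
      IsChain (· ≤ ·) (↑(T \ s) : Set (Submodule F (Fin n → F))) :=
    (mem_maxFacesAbove.1 hT).1.1.1.mono (by simp)
  calc (#(Icc l t) - #s) * ∑ T ∈ maxFacesAbove F n (Icc l t) s, _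
    _ ≤ (#(Icc l t) - #s) * ∑ T ∈ maxFacesAbove F n (Icc l t) s, #(badEdges f g (T \ s)) :=
      Nat.mul_le_mul_left _ <| sum_le_sum fun T hT =>
        hf.card_filter_powersetCard_two_le (hlink hT) (hchain hT) g
    _ ≤ 11 * 210 * 100 ^ 5 * ∑ T ∈ maxFacesAbove F n (Icc l t) s, #(badTriangles f (T \ s)) := hg
    _ ≤ _ := by
      rw [show 3 * (9 * (11 * 210 * 100 ^ 5)) = 11 * 210 * 100 ^ 5 * 27 by norm_num,
        mul_assoc _ 27, mul_sum _ _ 27]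
      exact Nat.mul_le_mul_left _ <| sum_le_sum fun T hT =>
        (hf.card_badTriangles_le (hlink hT) (hchain hT)).trans_eq (by congr!)

theorem isCochain_of_isFlagFace (hs : IsFlagFace F n S s)
    (hf : ∀ U V : Submodule F (Fin n → F), U ≠ V → U ∉ s → V ∉ s →
      IsFlagFace F n S (insert U (insert V s)) → f U V = (f V U)⁻¹) :
    IsCochain (linkVertices (fun x : Submodule F (Fin n → F) => Module.finrank F x) S s)
      fun U V => if U = V then 1 else f U V := by
  refine ⟨fun U => if_pos rfl, fun U hU V hV hUV => ?_⟩
  rcases eq_or_ne U V with rfl | hne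
  · simp
  · rw [if_neg hne, if_neg hne.symm]
    refine hf U V hne hU.1 hV.1 ⟨?_, ?_⟩
    · simpa using isChain_insert_of_mem_triangles hs.1 (t := (U, V, V))
        ⟨⟨hU, hV, hV⟩, hUV, .rfl, hUV⟩
    · simpa [hU.2.1, hV.2.1] using hs.2

end LinkWeights

theorem stmt_9_general :
    ∃ c : ℝ, 0 < c ∧
      ∀ (Γ : Type) [Group Γ] (F : Type) [Field F] [Fintype F] (n l t : ℕ), t ≤ n →
      ∀ s : Finset (Submodule F (Fin n → F)),
        IsFlagFace F n (Icc l t) s → s.Nonempty → #s + 3 ≤ #(Icc l t) →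
        ∀ f : Submodule F (Fin n → F) → Submodule F (Fin n → F) → Γ,
          (∀ U V : Submodule F (Fin n → F), U ≠ V → U ∉ s → V ∉ s →
            IsFlagFace F n (Icc l t) (insert U (insert V s)) → f U V = (f V U)⁻¹) →
          ∃ g : Submodule F (Fin n → F) → Γ,
            c * linkDist F n (Icc l t) s Γ f g ≤ linkWt F n (Icc l t) s Γ f := by
  refine ⟨(9 * (11 * 210 * 100 ^ 5) : ℕ)⁻¹, by positivity,
    fun Γ _ F _ _ n l t ht s hs hne hcard f hf => ?_⟩
  obtain ⟨g, hg⟩ := (isCochain_of_isFlagFace hs hf).exists_linkDist_le hs hne ht hcard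
  have hoff (U V) (hUV : U ≠ V) : f U V = if U = V then 1 else f U V := (if_neg hUV).symm
  refine ⟨g, (inv_mul_le_iff₀ (by positivity)).2 ?_⟩
  rwa [linkDist_congr hoff, linkWt_congr hoff]

/-- There is a universal constant `c > 0` such that for every group `Γ`,
all integers `d > k ≥ 2`, every prime power `q ≥ 25`, and every nonempty face `s` of
`B(2d, S_k, q)` of codimension at least `3`, every `Γ`-valued 1-cochain `f` on the link of
`s` admits `g` with `c · dist(f, δg) ≤ wt(δf)`. -/
theorem stmt_9 :
    ∃ c : ℝ, 0 < c ∧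
      ∀ (Γ : Type) [Group Γ], ∀ d k : ℕ, k < d → 2 ≤ k →
      ∀ q : ℕ, 25 ≤ q → IsPrimePow q →
      ∀ (F : Type) [Field F] [Fintype F], Fintype.card F = q →
      ∀ s : Finset (Submodule F (Fin (2 * d) → F)),
        IsFlagFace F (2 * d) (Finset.Icc (d - k) (d + k)) s → s.Nonempty →
        s.card + 3 ≤ 2 * k + 1 →
        ∀ f : Submodule F (Fin (2 * d) → F) → Submodule F (Fin (2 * d) → F) → Γ,
          (∀ U V : Submodule F (Fin (2 * d) → F), U ≠ V → U ∉ s → V ∉ s →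
            IsFlagFace F (2 * d) (Finset.Icc (d - k) (d + k)) (insert U (insert V s)) →
            f U V = (f V U)⁻¹) →
          ∃ g : Submodule F (Fin (2 * d) → F) → Γ,
            c * linkDist F (2 * d) (Finset.Icc (d - k) (d + k)) s Γ f g ≤
              linkWt F (2 * d) (Finset.Icc (d - k) (d + k)) s Γ f := by
  obtain ⟨c, hc, h⟩ := stmt_9_general
  exact ⟨c, hc, fun Γ _ d k hkd _ _ _ _ F _ _ _ s hs hne hcard =>
    h Γ F (2 * d) (d - k) (d + k) (by lia) s hs hne (by rw [Nat.card_Icc]; lia)⟩
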